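/- arXiv:1102.1491 — 18 statements merged into one kernel-verified Lean document; each statement's English description precedes it below -/
import Mathlib

section
/- Construction I. Let D be the directed graph on the vertex set V = {(g, B) : g ∈ P, B ∈ 𝓑_g}, with adjacency (g, B) → (g′, B′) if and only if g ∈ B′. Then D is a directed strongly regular graph with parameters (v, k, t, λ, μ) = (rq²b, rq(q−1), r(q−1)a + a, q(a−1) + (r−1)(q−1)a, r(q−1)a + a). -/
/-- A loopless directed graph (given by its adjacency relation `Adj` on the vertex
type `V`) is a *directed strongly regular graph* with parameters `(v, k, t, lam, mu)`:
the vertex set is finite of size `v`; every vertex has exactly `k` out-neighbors and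
exactly `k` in-neighbors; every vertex has exactly `t` out-neighbors that are also
in-neighbors; and for distinct vertices `x, y`, the number of directed paths of
length two from `x` to `y` is `lam` if `x → y` and `mu` otherwise. -/
def IsDSRG {V : Type} (Adj : V → V → Prop) (v k t lam mu : ℕ) : Prop :=
  Finite V ∧
  (∀ x : V, ¬ Adj x x) ∧
  Nat.card V = v ∧
  (∀ x : V, Nat.card {y : V // Adj x y} = k) ∧
  (∀ x : V, Nat.card {y : V // Adj y x} = k) ∧
  (∀ x : V, Nat.card {y : V // Adj x y ∧ Adj y x} = t) ∧
  (∀ x y : V, x ≠ y → Adj x y → Nat.card {z : V // Adj x z ∧ Adj z y} = lam) ∧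
  (∀ x y : V, x ≠ y → ¬ Adj x y → Nat.card {z : V // Adj x z ∧ Adj z y} = mu)

namespace DSRG

/-- A finset meeting each of the `r` groups in exactly `m` points has `r * m` points. -/
lemma card_of_card_filter_grp {α : Type} {r : ℕ} {grp : α → Fin r} {S : Finset α} {m : ℕ}
    (hS : ∀ h, (S.filter (fun g => grp g = h)).card = m) : S.card = r * m := by
  rw [Finset.card_eq_sum_card_fiberwise (f := grp) (t := Finset.univ) (by simp)]
  simp [hS]

variable {α ι : Type} [Fintype α] [DecidableEq α] [Fintype ι] {r : ℕ}

/-- Pairs `(g, i)` with `x ∈ blk g i` and `g ∈ S`, counted by their first component. -/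
lemma natCard_mem_blk_and_mem (blk : α → ι → Finset α) (x : α) (S : Finset α) :
    Nat.card {z : α × ι // x ∈ blk z.1 z.2 ∧ z.1 ∈ S} =
      ∑ g ∈ S, (Finset.univ.filter (fun i => x ∈ blk g i)).card := by
  rw [← Finset.card_sigma, Nat.card_eq_fintype_card, Fintype.card_subtype]
  refine Finset.card_bij' (fun z _ => ⟨z.1, z.2⟩) (fun z _ => (z.1, z.2)) ?_ ?_ ?_ ?_ <;>
    simp +contextual

/-- Double count of the pairs `(g, i)` with `x ∈ blk g i` and `g ∈ S`, when `S` meets every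
group in `m` points. -/
lemma natCard_mem_blk_and_mem_add {grp : α → Fin r} {blk : α → ι → Finset α} {q m : ℕ}
    (hcount : ∀ x g, (Finset.univ.filter (fun i => x ∈ blk g i)).card + (if x = g then q else 0) =
      (q - 1) + if grp g = grp x then 1 else 0)
    (x : α) {S : Finset α} (hS : ∀ h, (S.filter (fun g => grp g = h)).card = m) :
    Nat.card {z : α × ι // x ∈ blk z.1 z.2 ∧ z.1 ∈ S} + (if x ∈ S then q else 0) =
      r * m * (q - 1) + m := by
  have hsum := Finset.sum_congr (rfl : S = S) (fun g _ => hcount x g)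
  rw [Finset.sum_add_distrib, Finset.sum_add_distrib, Finset.sum_ite_eq, Finset.sum_const,
    ← Finset.card_filter, hS, card_of_card_filter_grp hS, smul_eq_mul] at hsum
  rw [natCard_mem_blk_and_mem, hsum]

/-- A family of blocks `blk g i` meeting each group in `a` points, in which the number of
blocks `blk g i` through `x` depends only on whether `x = g` and whether `x`, `g` lie in the
same group, gives a directed strongly regular graph. -/
theorem isDSRG_of_blocks {grp : α → Fin r} {blk : α → ι → Finset α} {q a b : ℕ}
    (hr : 1 ≤ r) (ha : 1 ≤ a) (hab : q = a * b + 1) (hι : Fintype.card ι = b * q)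
    (hgrp : ∀ h, (Finset.univ.filter (fun g => grp g = h)).card = q)
    (hblk : ∀ g i h, ((blk g i).filter (fun y => grp y = h)).card = a)
    (hcount : ∀ x g, (Finset.univ.filter (fun i => x ∈ blk g i)).card + (if x = g then q else 0) =
      (q - 1) + if grp g = grp x then 1 else 0) :
    IsDSRG (fun x y : α × ι => x.1 ∈ blk y.1 y.2)
      (r * q * q * b) (r * q * (q - 1)) (r * (q - 1) * a + a)
      (q * (a - 1) + (r - 1) * (q - 1) * a) (r * (q - 1) * a + a) := by
  have hirrefl : ∀ g i, g ∉ blk g i := by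
    intro g i hi
    have h := hcount g g
    have hpos : 0 < (Finset.univ.filter (fun i => g ∈ blk g i)).card :=
      Finset.card_pos.mpr ⟨i, by simpa using hi⟩
    simp only [if_true] at h
    omega
  have hpath (x y : α × ι) := natCard_mem_blk_and_mem_add hcount x.1 (hblk y.1 y.2)
  have hmu : ∀ x y : α × ι, x.1 ∉ blk y.1 y.2 →
      Nat.card {z : α × ι // x.1 ∈ blk z.1 z.2 ∧ z.1 ∈ blk y.1 y.2} = r * (q - 1) * a + a := by
    intro x y h
    have := hpath x y
    rw [if_neg h] at this
    rw [mul_right_comm]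
    exact this
  refine ⟨inferInstance, fun x => hirrefl x.1 x.2, ?_, fun x => ?_, fun x => ?_,
    fun x => hmu x x (hirrefl x.1 x.2), fun x y _ h => ?_, fun x y _ h => hmu x y h⟩
  · have hα := card_of_card_filter_grp hgrp
    rw [Finset.card_univ] at hα
    rw [Nat.card_eq_fintype_card, Fintype.card_prod, hα, hι]
    ring
  · have h := natCard_mem_blk_and_mem_add hcount x.1 hgrp
    simpa using h
  · have e : {y : α × ι // y.1 ∈ blk x.1 x.2} ≃ {g // g ∈ blk x.1 x.2} × ι :=
      (Equiv.prodSubtypeFstEquivSubtypeProd (p := fun g => g ∈ blk x.1 x.2))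
    rw [Nat.card_congr e, Nat.card_eq_fintype_card, Fintype.card_prod, Fintype.card_coe,
      card_of_card_filter_grp (hblk x.1 x.2), hι, hab, Nat.add_sub_cancel]
    ring
  · have h' := hpath x y
    rw [if_pos h] at h'
    obtain ⟨r, rfl⟩ := Nat.exists_eq_add_of_le' hr
    obtain ⟨a, rfl⟩ := Nat.exists_eq_add_of_le' ha
    obtain ⟨q, rfl⟩ : ∃ p, q = p + 1 := ⟨_, hab⟩
    simp only [Nat.add_sub_cancel] at h' ⊢
    linarith

end DSRG

/-- **Construction I.**  With `q = ab + 1`, the point set `P` (modelled by the finite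
type `α` of size `rq`) is partitioned into `r` groups `G 1, …, G r` of size `q`;
`Pblk j` enumerates the `q` blocks of the tactical configuration `𝓟_j` on `G j`
(each an `a`-subset, each point of `G j` in exactly `a` blocks); the sets
`B_j = ⋃_h Pblk h (σ h j)` pick exactly one block from each `𝓟_h` (with each block
used for exactly one `j`, via the bijections `σ h`), so `P_{hj} = Pblk h (σ h j)`;
and for each point `g` (lying in group `grp g`), `X g 1, …, X g b` is a partition of
`G (grp g) \ {g}` into `b` parts of size `a`.  The vertices are the pairs
`(g, B_{gl,j})`, encoded by the index triples `(g, l, j)`, with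
`B_{gl,j} = X g l ∪ (B_j \ P_{(grp g) j})`, and `(g,B) → (g',B')` iff `g ∈ B'`.
This directed graph is a DSRG with parameters
`(rq²b, rq(q−1), r(q−1)a + a, q(a−1) + (r−1)(q−1)a, r(q−1)a + a)`. -/
theorem constructionI_dsrg
    {α : Type} [Fintype α] [DecidableEq α]
    (r q a b : ℕ) (hr : 1 < r) (hq : 1 < q) (ha : 1 < a) (hb : 1 < b)
    (hab : q = a * b + 1)
    (G : Fin r → Finset α)
    (hGdisj : ∀ i j : Fin r, i ≠ j → Disjoint (G i) (G j))
    (hGcard : ∀ i : Fin r, (G i).card = q)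
    (grp : α → Fin r) (hgrp : ∀ x : α, x ∈ G (grp x))
    (Pblk : Fin r → Fin q → Finset α)
    (hPsub : ∀ (j : Fin r) (i : Fin q), Pblk j i ⊆ G j)
    (hPcard : ∀ (j : Fin r) (i : Fin q), (Pblk j i).card = a)
    (hPreg : ∀ j : Fin r, ∀ x ∈ G j,
      (Finset.univ.filter (fun i : Fin q => x ∈ Pblk j i)).card = a)
    (σ : Fin r → Fin q → Fin q) (hσ : ∀ h : Fin r, Function.Bijective (σ h))
    (X : α → Fin b → Finset α)
    (hXsub : ∀ (g : α) (l : Fin b), X g l ⊆ G (grp g) \ {g})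
    (hXcard : ∀ (g : α) (l : Fin b), (X g l).card = a)
    (hXdisj : ∀ (g : α) (l l' : Fin b), l ≠ l' → Disjoint (X g l) (X g l'))
    (hXcover : ∀ g : α, ∀ x ∈ G (grp g) \ {g}, ∃ l : Fin b, x ∈ X g l) :
    IsDSRG
      (fun x y : α × Fin b × Fin q =>
        x.1 ∈ X y.1 y.2.1 ∪
          ((Finset.univ.biUnion fun h : Fin r => Pblk h (σ h y.2.2)) \
            Pblk (grp y.1) (σ (grp y.1) y.2.2)))
      (r * q * q * b) (r * q * (q - 1)) (r * (q - 1) * a + a)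
      (q * (a - 1) + (r - 1) * (q - 1) * a) (r * (q - 1) * a + a) := by
  have hgrp_eq : ∀ {x : α} {h : Fin r}, x ∈ G h → grp x = h := by
    intro x h hx
    by_contra hne
    exact Finset.disjoint_left.mp (hGdisj _ _ hne) (hgrp x) hx
  have hXgrp : ∀ {x g l}, x ∈ X g l → grp x = grp g ∧ x ≠ g := by
    intro x g l hx
    have := hXsub g l hx
    rw [Finset.mem_sdiff, Finset.mem_singleton] at this
    exact ⟨hgrp_eq this.1, this.2⟩
  have hPgrp : ∀ {x h i}, x ∈ Pblk h i → grp x = h := fun hx => hgrp_eq (hPsub _ _ hx)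
  -- Membership in a block is decided within the group of the point.
  have hmem : ∀ x g l j,
      x ∈ X g l ∪ ((Finset.univ.biUnion fun h : Fin r => Pblk h (σ h j)) \
        Pblk (grp g) (σ (grp g) j)) ↔
      (grp x = grp g ∧ x ∈ X g l) ∨ (grp x ≠ grp g ∧ x ∈ Pblk (grp x) (σ (grp x) j)) := by
    intro x g l j
    simp only [Finset.mem_union, Finset.mem_sdiff, Finset.mem_biUnion, Finset.mem_univ, true_and]
    constructor
    · rintro (hx | ⟨⟨h, hx⟩, hn⟩)
      · exact Or.inl ⟨(hXgrp hx).1, hx⟩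
      · obtain rfl := hPgrp hx
        exact Or.inr ⟨fun he => hn (he ▸ hx), hx⟩
    · rintro (⟨_, hx⟩ | ⟨hne, hx⟩)
      · exact Or.inl hx
      · exact Or.inr ⟨⟨_, hx⟩, fun hx' => hne (hPgrp hx')⟩
  refine DSRG.isDSRG_of_blocks (grp := grp) (blk := fun g (i : Fin b × Fin q) =>
    X g i.1 ∪ ((Finset.univ.biUnion fun h : Fin r => Pblk h (σ h i.2)) \
      Pblk (grp g) (σ (grp g) i.2))) hr.le ha.le hab (by simp) ?_ ?_ ?_
  · intro h
    rw [← hGcard h]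
    congr 1
    ext x
    simp only [Finset.mem_filter, Finset.mem_univ, true_and]
    exact ⟨fun hx => hx ▸ hgrp x, hgrp_eq⟩
  · rintro g ⟨l, j⟩ h
    by_cases hh : h = grp g
    · rw [← hXcard g l]
      congr 1
      ext x
      rw [Finset.mem_filter, hmem]
      have := @hXgrp x g l
      grind
    · rw [← hPcard h (σ h j)]
      congr 1
      ext x
      rw [Finset.mem_filter, hmem]
      have := @hPgrp x h (σ h j)
      grind
  · intro x g
    simp only [hmem]
    by_cases hg : grp x = grp g
    · simp only [hg, true_and, ne_eq, not_true_eq_false, false_and, or_false, if_true]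
      by_cases hxg : x = g
      · have hempty : (Finset.univ.filter fun i : Fin b × Fin q => x ∈ X g i.1) = ∅ :=
          Finset.filter_eq_empty_iff.mpr fun i _ hi => (hXgrp hi).2 hxg
        rw [hempty, if_pos hxg, Finset.card_empty]
        omega
      · obtain ⟨l, hl⟩ := hXcover g x (by simpa [← hg, hxg] using hgrp x)
        have hprod : (Finset.univ.filter fun i : Fin b × Fin q => x ∈ X g i.1) =
            {l} ×ˢ Finset.univ := by
          ext ⟨l', j⟩
          simp only [Finset.mem_filter, Finset.mem_univ, true_and, Finset.mem_product,
            Finset.mem_singleton, and_true]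
          refine ⟨fun hl' => ?_, fun h => h ▸ hl⟩
          by_contra hne
          exact Finset.disjoint_left.mp (hXdisj g l' l hne) hl' hl
        rw [hprod, if_neg hxg, Finset.card_product, Finset.card_singleton, Finset.card_univ,
          Fintype.card_fin]
        omega
    · have hxg : x ≠ g := fun h => hg (h ▸ rfl)
      have hprod : (Finset.univ.filter fun i : Fin b × Fin q =>
          x ∈ Pblk (grp x) (σ (grp x) i.2)) =
          Finset.univ ×ˢ Finset.univ.filter fun j => x ∈ Pblk (grp x) (σ (grp x) j) := by
        ext ⟨l, j⟩
        simp
      have hσcard : (Finset.univ.filter fun j => x ∈ Pblk (grp x) (σ (grp x) j)).card = a := by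
        rw [← hPreg _ x (hgrp x)]
        exact Finset.card_bijective _ (hσ (grp x)) (by simp)
      simp only [hg, false_and, ne_eq, not_false_eq_true, true_and, false_or, Ne.symm hg, hxg,
        if_false, hprod, Finset.card_product, hσcard, Finset.card_univ, Fintype.card_fin]
      rw [hab, Nat.add_sub_cancel, mul_comm]
end

section
/- Construction I with b = 1. Let D be the directed graph on the vertex set V = {(g, B) : g ∈ P, B ∈ 𝓑_g}, with adjacency (g, B) → (g′, B′) if and only if g ∈ B′. Then D is a directed strongly regular graph with parameters (v, k, t, λ, μ) = (rq², rq(q−1), (q−1)(rq−r+1), r(q−1)² − 1, (q−1)(rq−r+1)). -/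
/-- Directed strong regularity is transported along an isomorphism of directed graphs. -/
theorem IsDSRG.of_equiv {V W : Type} {R : V → V → Prop} {S : W → W → Prop}
    {v k t lam mu : ℕ} (e : V ≃ W) (he : ∀ x y, R x y ↔ S (e x) (e y))
    (h : IsDSRG S v k t lam mu) : IsDSRG R v k t lam mu := by
  obtain ⟨hfin, hloop, hv, hout, hin, ht, hlam, hmu⟩ := h
  refine ⟨Finite.of_equiv W e.symm, fun x => by rw [he]; exact hloop _,
    (Nat.card_congr e).trans hv, fun x => ?_, fun x => ?_, fun x => ?_,
    fun x y hxy hadj => ?_, fun x y hxy hadj => ?_⟩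
  · rw [← hout (e x)]
    exact Nat.card_congr (e.subtypeEquiv fun y => he x y)
  · rw [← hin (e x)]
    exact Nat.card_congr (e.subtypeEquiv fun y => he y x)
  · rw [← ht (e x)]
    exact Nat.card_congr (e.subtypeEquiv fun y => and_congr (he x y) (he y x))
  · rw [← hlam (e x) (e y) (e.injective.ne hxy) ((he x y).1 hadj)]
    exact Nat.card_congr (e.subtypeEquiv fun z => and_congr (he x z) (he z y))
  · rw [← hmu (e x) (e y) (e.injective.ne hxy) (mt (he x y).2 hadj)]
    exact Nat.card_congr (e.subtypeEquiv fun z => and_congr (he x z) (he z y))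

/-- Coordinate form of the graph: a vertex is a triple (group, label of the point, block index),
and the point labelled `b` in a group `a` is missed exactly by the base block of index `b`. -/
def coordAdj {r q : ℕ} (x y : Fin r × Fin q × Fin q) : Prop :=
  x.2.1 ≠ if x.1 = y.1 then y.2.1 else y.2.2

/-- A fibrewise count for a family of subsets of `Fin q × Fin q` indexed by `Fin r`, all of whose
members but one are known to have the same size. -/
theorem card_triples_of_fibres {r q m n : ℕ} (p : Fin r × Fin q × Fin q → Prop) (a : Fin r)
    (ha : Nat.card {w : Fin q × Fin q // p (a, w)} = m)
    (hne : ∀ c, c ≠ a → Nat.card {w : Fin q × Fin q // p (c, w)} = n) :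
    Nat.card {z // p z} = m + (r - 1) * n := by
  classical
  have hsum : Nat.card {z // p z} = ∑ c, Nat.card {w : Fin q × Fin q // p (c, w)} := by
    simp only [Nat.card_eq_fintype_card, Fintype.card_subtype, Finset.card_filter]
    exact Fintype.sum_prod_type _
  rw [hsum, ← Finset.add_sum_erase _ _ (Finset.mem_univ a), ha,
    Finset.sum_congr rfl fun c hc => hne c (Finset.ne_of_mem_erase hc)]
  simp

theorem card_pairs_and {β γ : Type} (s : β → Prop) (t : γ → Prop) :
    Nat.card {w : β × γ // s w.1 ∧ t w.2} = Nat.card {b // s b} * Nat.card {c // t c} := by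
  rw [← Nat.card_prod]
  exact Nat.card_congr (Equiv.subtypeProdEquivProd (p := s) (q := t))

theorem card_fin_ne {q : ℕ} (b : Fin q) : Nat.card {f : Fin q // f ≠ b} = q - 1 := by
  simp [Nat.card_eq_fintype_card]

theorem card_fin_ne_and_ne {q : ℕ} {b d : Fin q} (h : b ≠ d) :
    Nat.card {f : Fin q // f ≠ b ∧ f ≠ d} = q - 2 := by
  rw [Nat.card_eq_fintype_card, Fintype.card_subtype]
  have : (Finset.univ.filter fun f : Fin q => f ≠ b ∧ f ≠ d) = {b, d}ᶜ := by
    ext f; simp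
  rw [this, Finset.card_compl, Finset.card_pair h, Fintype.card_fin]

theorem card_coordAdj_out {r q : ℕ} (x : Fin r × Fin q × Fin q) :
    Nat.card {y // coordAdj x y} = r * q * (q - 1) := by
  obtain ⟨a, b, i⟩ := x
  have hr : 0 < r := a.pos
  rw [card_triples_of_fibres (m := (q - 1) * q) (n := q * (q - 1)) _ a]
  · obtain ⟨r, rfl⟩ := Nat.exists_eq_add_of_lt hr
    simp only [zero_add, add_tsub_cancel_right]
    ring
  · simpa [coordAdj, ne_comm, card_fin_ne] using
      card_pairs_and (fun f : Fin q => f ≠ b) fun _ : Fin q => True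
  · intro c hc
    simpa [coordAdj, hc.symm, ne_comm, card_fin_ne] using
      card_pairs_and (fun _ : Fin q => True) fun k : Fin q => k ≠ b

theorem card_coordAdj_in {r q : ℕ} (y : Fin r × Fin q × Fin q) :
    Nat.card {x // coordAdj x y} = r * q * (q - 1) := by
  have hr : 0 < r := y.1.pos
  have hfib : ∀ c, Nat.card {w : Fin q × Fin q // coordAdj (c, w) y} = (q - 1) * q := fun c => by
    simpa [coordAdj, card_fin_ne] using
      card_pairs_and (fun f : Fin q => f ≠ if c = y.1 then y.2.1 else y.2.2) fun _ : Fin q => True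
  rw [card_triples_of_fibres _ y.1 (hfib _) fun c _ => hfib c]
  obtain ⟨r, rfl⟩ := Nat.exists_eq_add_of_lt hr
  simp only [zero_add, add_tsub_cancel_right]
  ring

theorem card_coordAdj_paths {r q : ℕ} (x y : Fin r × Fin q × Fin q) :
    Nat.card {z // coordAdj x z ∧ coordAdj z y} =
      Nat.card {f // f ≠ x.2.1 ∧ f ≠ if x.1 = y.1 then y.2.1 else y.2.2} * q +
        (r - 1) * ((q - 1) * (q - 1)) := by
  obtain ⟨a, b, i⟩ := x
  refine card_triples_of_fibres _ a ?_ fun c hc => ?_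
  · simpa [coordAdj, ne_comm, eq_comm] using
      card_pairs_and (fun f : Fin q => f ≠ b ∧ f ≠ if a = y.1 then y.2.1 else y.2.2)
        fun _ : Fin q => True
  · have h := card_pairs_and (fun f : Fin q => f ≠ if c = y.1 then y.2.1 else y.2.2)
      fun k : Fin q => k ≠ b
    rw [card_fin_ne, card_fin_ne] at h
    rw [← h]
    refine Nat.card_congr (Equiv.subtypeEquivRight fun w => ?_)
    simp only [coordAdj, if_neg hc.symm]
    rw [and_comm, ne_comm (a := b)]

theorem card_coordAdj_paths_of_adj {r q : ℕ} {x y : Fin r × Fin q × Fin q} (h : coordAdj x y) :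
    Nat.card {z // coordAdj x z ∧ coordAdj z y} = r * (q - 1) ^ 2 - 1 := by
  have hr : 0 < r := x.1.pos
  have hq : 2 ≤ q := by
    by_contra hlt
    have : Subsingleton (Fin q) := Fin.subsingleton_iff_le_one.2 (by omega)
    exact h (Subsingleton.elim _ _)
  rw [card_coordAdj_paths, card_fin_ne_and_ne h]
  obtain ⟨r, rfl⟩ := Nat.exists_eq_add_of_lt hr
  obtain ⟨q, rfl⟩ := Nat.exists_eq_add_of_le hq
  have h1 : 2 + q - 1 = q + 1 := by omega
  simp only [zero_add, add_tsub_cancel_right, add_tsub_cancel_left, h1]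
  symm
  apply Nat.sub_eq_of_eq_add
  ring

theorem card_coordAdj_paths_of_not_adj {r q : ℕ} {x y : Fin r × Fin q × Fin q}
    (h : ¬ coordAdj x y) :
    Nat.card {z // coordAdj x z ∧ coordAdj z y} = (q - 1) * (r * q - r + 1) := by
  have hr : 0 < r := x.1.pos
  have hq : 0 < q := x.2.1.pos
  rw [card_coordAdj_paths, ← not_ne_iff.1 h]
  simp only [and_self, card_fin_ne]
  obtain ⟨r, rfl⟩ := Nat.exists_eq_add_of_lt hr
  obtain ⟨q, rfl⟩ := Nat.exists_eq_add_of_lt hq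
  have h1 : (0 + r + 1) * (0 + q + 1) - (0 + r + 1) = (r + 1) * q :=
    Nat.sub_eq_of_eq_add (by ring)
  rw [h1]
  simp only [zero_add, add_tsub_cancel_right]
  ring

theorem isDSRG_coordAdj (r q : ℕ) :
    IsDSRG (coordAdj (r := r) (q := q)) (r * q * q) (r * q * (q - 1))
      ((q - 1) * (r * q - r + 1)) (r * (q - 1) ^ 2 - 1) ((q - 1) * (r * q - r + 1)) := by
  have hloop : ∀ x : Fin r × Fin q × Fin q, ¬ coordAdj x x := fun x => by simp [coordAdj]
  exact ⟨inferInstance, hloop, by simp [mul_assoc], card_coordAdj_out, card_coordAdj_in,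
    fun x => card_coordAdj_paths_of_not_adj (hloop x),
    fun _ _ _ h => card_coordAdj_paths_of_adj h,
    fun _ _ _ h => card_coordAdj_paths_of_not_adj h⟩

/-- A family of `#s` distinct subsets of `s` of size `#s - 1` contains every `s.erase x`. -/
theorem exists_eq_erase_of_injective {α : Type} [DecidableEq α] {q : ℕ} {s : Finset α}
    (hs : s.card = q) {B : Fin q → Finset α} (hsub : ∀ i, B i ⊆ s)
    (hcard : ∀ i, (B i).card = q - 1) (hinj : Function.Injective B) {x : α} (hx : x ∈ s) :
    ∃ i, B i = s.erase x := by
  have hq : 1 ≤ q := hs ▸ Finset.card_pos.2 ⟨x, hx⟩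
  have himg : Finset.univ.image B = s.powersetCard (q - 1) := by
    refine Finset.eq_of_subset_of_card_le (fun t ht => ?_) ?_
    · obtain ⟨i, -, rfl⟩ := Finset.mem_image.1 ht
      exact Finset.mem_powersetCard.2 ⟨hsub i, hcard i⟩
    · rw [Finset.card_image_of_injective _ hinj, Finset.card_powersetCard, hs,
        Nat.choose_symm hq]
      simp
  have hmem : s.erase x ∈ Finset.univ.image B := by
    rw [himg, Finset.mem_powersetCard]
    exact ⟨Finset.erase_subset _ _, by rw [Finset.card_erase_of_mem hx, hs]⟩
  simpa using hmem

/-- **Construction I with `b = 1`.**  The point set `P` (the finite type `α` of size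
`rq`) is partitioned into `r` groups `G 1, …, G r` of size `q`; for each group `G j`,
`Pblk j 1, …, Pblk j q` are pairwise distinct `(q−1)`-element subsets of `G j`
(hence exactly the `q` such subsets), and `B_i = ⋃_j Pblk j i`.  For a point `g` in
group `grp g`, the block `B_{g,j} = (G (grp g) \ {g}) ∪ (B_j \ Pblk (grp g) j)`.
The vertices are the pairs `(g, B_{g,j})`, encoded by the index pairs `(g, j)`, with
`(g,B) → (g',B')` iff `g ∈ B'`.  This directed graph is a DSRG with parameters
`(rq², rq(q−1), (q−1)(rq−r+1), r(q−1)² − 1, (q−1)(rq−r+1))`. -/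
theorem constructionI_b_eq_one_dsrg
    {α : Type} [Fintype α] [DecidableEq α]
    (r q : ℕ) (hr : 1 < r) (hq : 1 < q)
    (G : Fin r → Finset α)
    (hGdisj : ∀ i j : Fin r, i ≠ j → Disjoint (G i) (G j))
    (hGcard : ∀ i : Fin r, (G i).card = q)
    (grp : α → Fin r) (hgrp : ∀ x : α, x ∈ G (grp x))
    (Pblk : Fin r → Fin q → Finset α)
    (hPsub : ∀ (j : Fin r) (i : Fin q), Pblk j i ⊆ G j)
    (hPcard : ∀ (j : Fin r) (i : Fin q), (Pblk j i).card = q - 1)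
    (hPinj : ∀ j : Fin r, Function.Injective (Pblk j)) :
    IsDSRG
      (fun x y : α × Fin q =>
        x.1 ∈ (G (grp y.1) \ {y.1}) ∪
          ((Finset.univ.biUnion fun h : Fin r => Pblk h y.2) \ Pblk (grp y.1) y.2))
      (r * q * q) (r * q * (q - 1)) ((q - 1) * (r * q - r + 1))
      (r * (q - 1) ^ 2 - 1) ((q - 1) * (r * q - r + 1)) := by
  have hgrp_eq : ∀ {x : α} {h : Fin r}, x ∈ G h → grp x = h := fun {x h} hx => by
    by_contra hne
    exact Finset.disjoint_left.1 (hGdisj _ _ hne) (hgrp x) hx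
  choose label hlabel using fun x : α =>
    exists_eq_erase_of_injective (hGcard (grp x)) (hPsub (grp x)) (hPcard (grp x))
      (hPinj (grp x)) (hgrp x)
  have hmem : ∀ (x : α) (i : Fin q), x ∈ Pblk (grp x) i ↔ label x ≠ i := fun x i => by
    refine ⟨?_, fun hne => ?_⟩
    · rintro hx rfl
      simp [hlabel] at hx
    · by_contra hx
      refine hne (hPinj (grp x) ?_)
      rw [hlabel]
      refine (Finset.eq_of_subset_of_card_le (Finset.subset_erase.2 ⟨hPsub _ _, hx⟩) ?_).symm
      rw [Finset.card_erase_of_mem (hgrp x), hGcard, hPcard]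
  have hinj : ∀ {x y : α}, grp x = grp y → label x = label y → x = y := fun {x y} hg hl => by
    by_contra hne
    have hx : x ∈ Pblk (grp y) (label y) := by
      rw [hlabel y]
      exact Finset.mem_erase.2 ⟨hne, hg ▸ hgrp x⟩
    rw [← hg] at hx
    exact (hmem x _).1 hx hl
  have hbij : Function.Bijective fun x : α => (grp x, label x) := by
    refine ⟨fun x y hxy => hinj (Prod.ext_iff.1 hxy).1 (Prod.ext_iff.1 hxy).2, fun ⟨h, i⟩ => ?_⟩
    obtain ⟨x, hxG, hxP⟩ := Finset.exists_mem_notMem_of_card_lt_card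
      (s := Pblk h i) (t := G h) (by rw [hPcard, hGcard]; omega)
    obtain rfl := hgrp_eq hxG
    exact ⟨x, Prod.ext rfl (not_ne_iff.1 (mt (hmem x i).2 hxP))⟩
  refine (isDSRG_coordAdj r q).of_equiv
    (((Equiv.ofBijective _ hbij).prodCongr (Equiv.refl _)).trans (Equiv.prodAssoc _ _ _)) ?_
  rintro ⟨x, i⟩ ⟨y, j⟩
  have hbase : x ∈ Finset.univ.biUnion (fun h => Pblk h j) ↔ x ∈ Pblk (grp x) j := by
    simp only [Finset.mem_biUnion, Finset.mem_univ, true_and]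
    refine ⟨fun ⟨h, hx⟩ => ?_, fun hx => ⟨_, hx⟩⟩
    rwa [hgrp_eq (hPsub _ _ hx)]
  simp only [coordAdj, Equiv.trans_apply, Equiv.prodCongr_apply, Prod.map_apply,
    Equiv.ofBijective_apply, Equiv.prodAssoc_apply, Finset.mem_union, Finset.mem_sdiff,
    Finset.mem_singleton, hbase]
  by_cases hg : grp x = grp y
  · have hlab : label x = label y ↔ x = y := ⟨hinj hg, congrArg label⟩
    simp [← hg, hgrp x, hlab]
  · have hxG : x ∉ G (grp y) := fun hx => hg (hgrp_eq hx)
    simp [hg, hxG, mt (@hPsub (grp y) j x) hxG, hmem]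
end

section
/- Construction I with a = 1. Let D = D(𝓣^π) be the directed graph on the vertex set V = {(g, B) : g ∈ P, B ∈ 𝓒_g^π}, with adjacency (g, B) → (g′, B′) if and only if g ∈ B′. Then D is a directed strongly regular graph with parameters (v, k, t, λ, μ) = (rq²(q−1), rq(q−1), rq − r + 1, rq − r − q + 1, rq − r + 1). -/
open Finset

/-- Vertices `(p, B)` with `B ∈ C p` satisfying `Q` are counted point by point. -/
lemma natCard_flag_subtype {α β : Type} [Fintype α] (C : α → Finset β)
    (Q : α → β → Prop) [∀ p, DecidablePred (Q p)] :
    Nat.card {y : {x : α × β // x.2 ∈ C x.1} // Q y.1.1 y.1.2} =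
      ∑ p, #{B ∈ C p | Q p B} := by
  rw [← card_sigma, ← Nat.card_eq_finsetCard]
  exact Nat.card_congr
    { toFun := fun y => ⟨⟨y.1.1.1, y.1.1.2⟩, by simpa using ⟨y.1.2, y.2⟩⟩
      invFun := fun s => ⟨⟨(s.1.1, s.1.2), (mem_filter.1 (mem_sigma.1 s.2).2).1⟩,
        (mem_filter.1 (mem_sigma.1 s.2).2).2⟩
      left_inv := fun _ => rfl
      right_inv := fun _ => rfl }

section Groups

variable {α : Type} {r : ℕ} {G : Fin r → Finset α} {grp : α → Fin r}

lemma mem_group_iff (hGdisj : ∀ i j : Fin r, i ≠ j → Disjoint (G i) (G j))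
    (hgrp : ∀ x : α, x ∈ G (grp x)) {x : α} {h : Fin r} : x ∈ G h ↔ grp x = h := by
  refine ⟨fun hx => ?_, fun hx => hx ▸ hgrp x⟩
  by_contra hne
  exact disjoint_left.1 (hGdisj _ _ hne) (hgrp x) hx

variable [DecidableEq α]

lemma card_eq_sum_card_inter_group (hmem : ∀ {x h}, x ∈ G h ↔ grp x = h) (S : Finset α) :
    #S = ∑ h, #(S ∩ G h) := by
  rw [card_eq_sum_card_fiberwise (f := grp) (t := univ) (fun _ _ => mem_coe.2 (mem_univ _))]
  refine sum_congr rfl fun h _ => congrArg card ?_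
  ext x
  simp [hmem]

lemma eq_of_mem_of_grp_eq (hmem : ∀ {x h}, x ∈ G h ↔ grp x = h) {B : Finset α}
    (hB : ∀ h, #(B ∩ G h) = 1) {x y : α} (hx : x ∈ B) (hy : y ∈ B) (hxy : grp x = grp y) :
    x = y :=
  card_le_one.1 (hB (grp y)).le x (mem_inter.2 ⟨hx, hmem.2 hxy⟩) y
    (mem_inter.2 ⟨hy, hmem.2 rfl⟩)

/-- If `q` transversal blocks pairwise meet exactly in `{i}`, then every point outside the group
of `i` lies on exactly one of them. -/
lemma card_filter_mem_eq_one (hmem : ∀ {x h}, x ∈ G h ↔ grp x = h) {q : ℕ}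
    (hGcard : ∀ h, #(G h) = q) {i : α} {L : Finset (Finset α)} (hLq : #L = q)
    (hL : ∀ B ∈ L, ∀ h, #(B ∩ G h) = 1)
    (hmeet : ∀ B ∈ L, ∀ C ∈ L, B ≠ C → B ∩ C = {i}) {g : α} (hg : grp g ≠ grp i) :
    #{B ∈ L | g ∈ B} = 1 := by
  have hle : ∀ x ∈ G (grp g), #{B ∈ L | x ∈ B} ≤ 1 := by
    intro x hx
    refine card_le_one.2 fun B hB C hC => ?_
    rw [mem_filter] at hB hC
    by_contra hne
    have hxi : x ∈ B ∩ C := mem_inter.2 ⟨hB.2, hC.2⟩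
    rw [hmeet B hB.1 C hC.1 hne, mem_singleton] at hxi
    exact hg (hxi ▸ hmem.1 hx).symm
  have hsum : ∑ x ∈ G (grp g), #{B ∈ L | x ∈ B} = ∑ x ∈ G (grp g), 1 := by
    have hswap := sum_card_bipartiteAbove_eq_sum_card_bipartiteBelow
      (s := G (grp g)) (t := L) (fun (x : α) (B : Finset α) => x ∈ B)
    simp only [bipartiteAbove, bipartiteBelow] at hswap
    rw [hswap, sum_const, smul_eq_mul, mul_one, hGcard, ← hLq, card_eq_sum_ones]
    refine sum_congr rfl fun B hB => ?_
    rw [filter_mem_eq_inter, inter_comm, hL B hB]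
  exact (sum_eq_sum_iff_of_le hle).1 hsum g (hmem.2 rfl)

variable {L : α → Finset (Finset α)}

lemma pairwiseDisjoint_of_same_group (hmem : ∀ {x h}, x ∈ G h ↔ grp x = h)
    (hL : ∀ i, ∀ B ∈ L i, i ∈ B ∧ ∀ h, #(B ∩ G h) = 1) (p : α) :
    Set.PairwiseDisjoint (↑(G (grp p) \ {p})) L := by
  intro i hi j hj hij
  refine disjoint_left.2 fun B hBi hBj => hij ?_
  simp only [coe_sdiff, Set.mem_sdiff, mem_coe, hmem] at hi hj
  exact eq_of_mem_of_grp_eq hmem (hL i B hBi).2 (hL i B hBi).1 (hL j B hBj).1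
    (hi.1.trans hj.1.symm)

variable {q : ℕ}

lemma card_biUnion_group (hmem : ∀ {x h}, x ∈ G h ↔ grp x = h) (hGcard : ∀ h, #(G h) = q)
    (hL : ∀ i, ∀ B ∈ L i, i ∈ B ∧ ∀ h, #(B ∩ G h) = 1) (hLq : ∀ i, #(L i) = q) (p : α) :
    #((G (grp p) \ {p}).biUnion L) = (q - 1) * q := by
  rw [card_biUnion (pairwiseDisjoint_of_same_group hmem hL p), sum_congr rfl fun i _ => hLq i,
    sum_const, smul_eq_mul, sdiff_singleton_eq_erase, card_erase_of_mem (hmem.2 rfl), hGcard]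

/-- The number of blocks of `⋃ i ∈ G (grp p) \ {p}, L i` through a point `g`. -/
lemma card_filter_mem_biUnion (hmem : ∀ {x h}, x ∈ G h ↔ grp x = h)
    (hGcard : ∀ h, #(G h) = q)
    (hL : ∀ i, ∀ B ∈ L i, i ∈ B ∧ ∀ h, #(B ∩ G h) = 1) (hLq : ∀ i, #(L i) = q)
    (hmeet : ∀ i, ∀ B ∈ L i, ∀ C ∈ L i, B ≠ C → B ∩ C = {i}) (p g : α) :
    #{B ∈ (G (grp p) \ {p}).biUnion L | g ∈ B} =
      if grp p = grp g then (if p = g then 0 else q) else q - 1 := by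
  rw [filter_biUnion, card_biUnion fun i hi j hj hij =>
    (pairwiseDisjoint_of_same_group hmem hL p hi hj hij).mono (filter_subset _ _)
      (filter_subset _ _)]
  split_ifs with hpg hp
  · refine sum_eq_zero fun i hi => card_eq_zero.2 (filter_eq_empty_iff.2 fun B hB hgB => ?_)
    rw [mem_sdiff, mem_singleton, hmem] at hi
    exact hi.2 (hp ▸ eq_of_mem_of_grp_eq hmem (hL i B hB).2 (hL i B hB).1 hgB
      (hi.1.trans hpg))
  · rw [sum_eq_single_of_mem g (by simp [hmem, hpg, Ne.symm hp]), ← hLq g]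
    · exact congrArg card (filter_true_of_mem fun B hB => (hL g B hB).1)
    · refine fun i hi hig => card_eq_zero.2 (filter_eq_empty_iff.2 fun B hB hgB => hig ?_)
      rw [mem_sdiff, hmem] at hi
      exact eq_of_mem_of_grp_eq hmem (hL i B hB).2 (hL i B hB).1 hgB (hi.1.trans hpg)
  · rw [sum_congr rfl (g := fun _ => 1), sum_const, smul_eq_mul, mul_one,
      sdiff_singleton_eq_erase, card_erase_of_mem (hmem.2 rfl), hGcard]
    intro i hi
    rw [mem_sdiff, hmem] at hi
    exact card_filter_mem_eq_one hmem hGcard (hLq i) (fun B hB => (hL i B hB).2) (hmeet i)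
      (hi.1 ▸ Ne.symm hpg)

lemma sum_ite_grp (hmem : ∀ {x h}, x ∈ G h ↔ grp x = h) (S : Finset α) (g : α) :
    ∑ p ∈ S, (if grp p = grp g then (if p = g then 0 else q) else q - 1) =
      #((S ∩ G (grp g)).erase g) * q + (#S - #(S ∩ G (grp g))) * (q - 1) := by
  have hin : S.filter (fun p => grp p = grp g) = S ∩ G (grp g) := by
    ext x
    simp [hmem]
  have hout : #(S.filter fun p => ¬ grp p = grp g) = #S - #(S ∩ G (grp g)) := by
    rw [← hin, ← card_filter_add_card_filter_not (s := S) (fun p => grp p = grp g)]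
    omega
  rw [sum_ite, sum_const, hout, hin, smul_eq_mul, sum_ite, sum_const_zero, zero_add, sum_const,
    smul_eq_mul, filter_ne']

lemma sum_ite_grp_of_transversal (hmem : ∀ {x h}, x ∈ G h ↔ grp x = h) {B : Finset α}
    (hB : ∀ h, #(B ∩ G h) = 1) (g : α) :
    ∑ p ∈ B, (if grp p = grp g then (if p = g then 0 else q) else q - 1) =
      (if g ∈ B then 0 else q) + (r - 1) * (q - 1) := by
  rw [sum_ite_grp hmem, card_eq_sum_card_inter_group hmem B, sum_congr rfl fun h _ => hB h]
  by_cases hg : g ∈ B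
  · rw [card_erase_of_mem (mem_inter.2 ⟨hg, hmem.2 rfl⟩)]
    simp [hB, hg]
  · rw [erase_eq_of_notMem fun h => hg (mem_inter.1 h).1]
    simp [hB, hg]

end Groups

/-- **Construction I with `a = 1`.**  The point set `P` (the finite type `α` of size
`rq`) is partitioned into `r` groups of size `q`.  The transversal blocks are the
`r`-subsets of `P` meeting every group in exactly one point; for each point `i`,
the `q^{r-1}` transversal blocks through `i` are partitioned into `w = q^{r-2}`
parts `Bpart i 1, …, Bpart i w`, each consisting of `q` blocks any two distinct
members of which meet exactly in `{i}`.  Given an injection `π : P → {1, …, w}`,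
set `𝓒_g^π = ⋃_{i ∈ G (grp g) \ {g}} Bpart i (π i)`.  The vertices are the pairs
`(g, B)` with `B ∈ 𝓒_g^π`, and `(g,B) → (g',B')` iff `g ∈ B'`.  This directed
graph is a DSRG with parameters
`(rq²(q−1), rq(q−1), rq − r + 1, rq − r − q + 1, rq − r + 1)`. -/
theorem constructionI_a_eq_one_dsrg
    {α : Type} [Fintype α] [DecidableEq α]
    (r q : ℕ) (hr : 1 < r) (hq : 1 < q) (hrq : r ≤ q ^ (r - 3))
    (G : Fin r → Finset α)
    (hGdisj : ∀ i j : Fin r, i ≠ j → Disjoint (G i) (G j))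
    (hGcard : ∀ i : Fin r, (G i).card = q)
    (grp : α → Fin r) (hgrp : ∀ x : α, x ∈ G (grp x))
    (Bpart : α → Fin (q ^ (r - 2)) → Finset (Finset α))
    (hBtrans : ∀ (i : α) (m : Fin (q ^ (r - 2))), ∀ B ∈ Bpart i m,
      i ∈ B ∧ ∀ h : Fin r, (B ∩ G h).card = 1)
    (hBq : ∀ (i : α) (m : Fin (q ^ (r - 2))), (Bpart i m).card = q)
    (hBdisj : ∀ (i : α) (m m' : Fin (q ^ (r - 2))), m ≠ m' →
      Disjoint (Bpart i m) (Bpart i m'))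
    (hBcover : ∀ (i : α) (B : Finset α), i ∈ B → (∀ h : Fin r, (B ∩ G h).card = 1) →
      ∃ m : Fin (q ^ (r - 2)), B ∈ Bpart i m)
    (hBint : ∀ (i : α) (m : Fin (q ^ (r - 2))), ∀ B ∈ Bpart i m, ∀ C ∈ Bpart i m,
      B ≠ C → B ∩ C = {i})
    (π : α → Fin (q ^ (r - 2))) (hπ : Function.Injective π) :
    IsDSRG
      (V := {x : α × Finset α //
        x.2 ∈ (G (grp x.1) \ {x.1}).biUnion fun i => Bpart i (π i)})
      (fun x y => x.1.1 ∈ y.1.2)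
      (r * q ^ 2 * (q - 1)) (r * q * (q - 1)) (r * q - r + 1)
      (r * q - r - q + 1) (r * q - r + 1) := by
  have hmem : ∀ {x h}, x ∈ G h ↔ grp x = h := fun {x h} => mem_group_iff hGdisj hgrp
  have hL : ∀ i, ∀ B ∈ Bpart i (π i), i ∈ B ∧ ∀ h, #(B ∩ G h) = 1 :=
    fun i => hBtrans i (π i)
  have hLq : ∀ i, #(Bpart i (π i)) = q := fun i => hBq i (π i)
  have hmeet : ∀ i, ∀ B ∈ Bpart i (π i), ∀ C ∈ Bpart i (π i), B ≠ C → B ∩ C = {i} :=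
    fun i => hBint i (π i)
  have hcard : Fintype.card α = r * q := by
    rw [← card_univ, card_eq_sum_card_inter_group hmem univ]
    simp [hGcard]
  set C : α → Finset (Finset α) :=
    fun p => (G (grp p) \ {p}).biUnion fun i => Bpart i (π i) with hC
  have hCcard : ∀ p, #(C p) = (q - 1) * q := card_biUnion_group hmem hGcard hL hLq
  have hthrough := card_filter_mem_biUnion hmem hGcard hL hLq hmeet
  have htrans : ∀ x : {x : α × Finset α // x.2 ∈ C x.1}, ∀ h, #(x.1.2 ∩ G h) = 1 := by
    rintro ⟨⟨g, B⟩, hB⟩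
    obtain ⟨i, -, hi⟩ := mem_biUnion.1 hB
    exact (hL i B hi).2
  have hloop : ∀ x : {x : α × Finset α // x.2 ∈ C x.1}, x.1.1 ∉ x.1.2 := by
    rintro ⟨⟨g, B⟩, hB⟩ hgB
    obtain ⟨i, hi, hiB⟩ := mem_biUnion.1 hB
    rw [mem_sdiff, mem_singleton, hmem] at hi
    exact hi.2 (eq_of_mem_of_grp_eq hmem (hL i B hiB).2 (hL i B hiB).1 hgB hi.1)
  have hpaths : ∀ x y : {x : α × Finset α // x.2 ∈ C x.1},
      Nat.card {z : {x : α × Finset α // x.2 ∈ C x.1} // x.1.1 ∈ z.1.2 ∧ z.1.1 ∈ y.1.2} =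
        (if x.1.1 ∈ y.1.2 then 0 else q) + (r - 1) * (q - 1) := by
    intro x y
    rw [natCard_flag_subtype C fun p B => x.1.1 ∈ B ∧ p ∈ y.1.2,
      ← sum_ite_grp_of_transversal hmem (htrans y), ← sum_subset (subset_univ y.1.2)]
    · refine sum_congr rfl fun p hp => ?_
      rw [← hthrough]
      simp [hp, hC]
    · intro p _ hp
      simp [hp]
  obtain ⟨r, rfl⟩ : ∃ s, r = s + 1 := ⟨r - 1, by omega⟩
  obtain ⟨q, rfl⟩ : ∃ s, q = s + 1 := ⟨q - 1, by omega⟩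
  have hmu : (r + 1) * (q + 1) - (r + 1) + 1 = (q + 1) + r * q := by
    have : (r + 1) * (q + 1) = r * q + r + q + 1 := by ring
    omega
  have hlam : (r + 1) * (q + 1) - (r + 1) - (q + 1) + 1 = r * q := by
    have : (r + 1) * (q + 1) = r * q + r + q + 1 := by ring
    have : 0 < r * q := Nat.mul_pos (by omega) (by omega)
    omega
  simp only [Nat.add_sub_cancel] at *
  refine ⟨inferInstance, hloop, ?_, fun x => ?_, fun x => ?_, fun x => ?_, fun x y _ hxy => ?_,
    fun x y _ hxy => ?_⟩
  · have hV := natCard_flag_subtype C fun _ _ => True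
    rw [Nat.card_congr (Equiv.subtypeUnivEquiv fun _ => trivial)] at hV
    simp only [filter_true, hCcard, sum_const, card_univ, hcard, smul_eq_mul] at hV
    rw [hV]
    ring
  · rw [natCard_flag_subtype C fun _ B => x.1.1 ∈ B, sum_congr rfl fun p _ => hthrough p x.1.1]
    have hsum := sum_ite_grp (q := q + 1) hmem univ x.1.1
    rw [univ_inter, card_erase_of_mem (hmem.2 rfl), hGcard, card_univ, hcard] at hsum
    simp only [Nat.add_sub_cancel] at hsum
    have : (r + 1) * (q + 1) - (q + 1) = r * (q + 1) := by
      rw [add_mul, one_mul, Nat.add_sub_cancel]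
    rw [hsum, this]
    ring
  · rw [natCard_flag_subtype C fun p _ => p ∈ x.1.2]
    have hsize : #x.1.2 = r + 1 := by
      rw [card_eq_sum_card_inter_group hmem x.1.2]
      simp [htrans x]
    rw [← sum_subset (subset_univ x.1.2) fun p _ hp => by simp [hp],
      sum_congr rfl (g := fun _ => q * (q + 1)), sum_const, hsize, smul_eq_mul]
    · ring
    · intro p hp
      simp [hp, hCcard]
  · rw [hpaths x x, if_neg (hloop x), hmu]
  · rw [hpaths x y, if_pos hxy, hlam, zero_add]
  · rw [hpaths x y, if_neg hxy, hmu]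
end

section
/- Construction II, first graph. Let D₁ be the directed graph on the vertex set V = {(g, B) : g ∈ P, B ∈ 𝓑_g}, with adjacency (g, B) → (g′, B′) if and only if g ∈ B′. Then D₁ is a directed strongly regular graph with parameters (v, k, t, λ, μ) = (ns, ls, ld, (l−1)d, ld). -/
/-- Counting flags `(h, C)` with `C ∈ 𝓑 h`, `h ∈ S` and `p C`, one base point at a time. -/
theorem card_flags_eq_sum {α : Type} (𝓑 : α → Finset (Finset α)) (S : Finset α)
    (p : Finset α → Prop) [DecidablePred p]
    (q : {x : α × Finset α // x.2 ∈ 𝓑 x.1} → Prop)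
    (hq : ∀ z, q z ↔ z.1.1 ∈ S ∧ p z.1.2) :
    Nat.card {z // q z} = ∑ h ∈ S, ((𝓑 h).filter p).card := by
  rw [← Finset.card_sigma, ← Nat.card_eq_finsetCard]
  refine Nat.card_congr
    { toFun := fun z => ⟨⟨z.1.1.1, z.1.1.2⟩, ?_⟩
      invFun := fun w => ⟨⟨(w.1.1, w.1.2), ?_⟩, ?_⟩
      left_inv := fun _ => rfl
      right_inv := fun _ => rfl }
  · have h := (hq z.1).1 z.2
    simpa using ⟨h.1, z.1.2, h.2⟩
  · have h := w.2
    simp only [Finset.mem_sigma, Finset.mem_filter] at h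
    exact h.2.1
  · have h := w.2
    simp only [Finset.mem_sigma, Finset.mem_filter] at h
    exact (hq _).2 ⟨h.1, h.2.2⟩

/-- Counting flags `(h, C)` with `h ∈ S` and `g ∈ C`, when each point other than `h` lies in
exactly `d` blocks of `𝓑 h` and `h` itself lies in none. -/
theorem card_flags_through {α : Type} [DecidableEq α] (d : ℕ) (𝓑 : α → Finset (Finset α))
    (hB : ∀ i, ∀ B ∈ 𝓑 i, i ∉ B)
    (hBreg : ∀ i x : α, x ≠ i → ((𝓑 i).filter (fun B => x ∈ B)).card = d)
    (S : Finset α) (g : α) (q : {x : α × Finset α // x.2 ∈ 𝓑 x.1} → Prop)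
    (hq : ∀ z, q z ↔ z.1.1 ∈ S ∧ g ∈ z.1.2) :
    Nat.card {z // q z} = (S.erase g).card * d := by
  rw [card_flags_eq_sum 𝓑 (S.erase g) (fun C => g ∈ C) q]
  · exact Finset.sum_const_nat fun h hh => hBreg h g (Finset.ne_of_mem_erase hh).symm
  · intro z
    have hz : g ∈ z.1.2 → z.1.1 ≠ g := fun hg he => hB _ _ z.2 (he ▸ hg)
    rw [hq, Finset.mem_erase]
    tauto

/-- **Construction II, first graph `D₁`.**  Let `n, d, l, s` be positive integers
with `d(n−1) = ls`.  The point set `P` is the finite type `α` with `n` elements;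
for each `i ∈ P`, `𝓑 i` is a family of `s` distinct blocks, each an `l`-element
subset of `P \ {i}`, such that every point of `P \ {i}` lies in exactly `d` blocks
of `𝓑 i`.  The vertices are the pairs `(g, B)` with `B ∈ 𝓑 g`, and
`(g,B) → (g',B')` iff `g ∈ B'`.  This directed graph is a DSRG with parameters
`(ns, ls, ld, (l−1)d, ld)`. -/
theorem constructionII_D1_dsrg
    {α : Type} [Fintype α] [DecidableEq α]
    (n d l s : ℕ) (hn : 0 < n) (hd : 0 < d) (hl : 0 < l) (hs : 0 < s)
    (hdn : d * (n - 1) = l * s)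
    (hcard : Fintype.card α = n)
    (𝓑 : α → Finset (Finset α))
    (hBs : ∀ i : α, (𝓑 i).card = s)
    (hBl : ∀ i : α, ∀ B ∈ 𝓑 i, i ∉ B ∧ B.card = l)
    (hBreg : ∀ i x : α, x ≠ i → ((𝓑 i).filter (fun B => x ∈ B)).card = d) :
    IsDSRG (V := {x : α × Finset α // x.2 ∈ 𝓑 x.1})
      (fun x y => x.1.1 ∈ y.1.2)
      (n * s) (l * s) (l * d) ((l - 1) * d) (l * d) := by
  have hB : ∀ i, ∀ B ∈ 𝓑 i, i ∉ B := fun i B h => (hBl i B h).1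
  refine ⟨inferInstance, fun x => hB _ _ x.2, ?_, fun x => ?_, fun x => ?_, fun x => ?_,
    fun x y _ hxy => ?_, fun x y _ hxy => ?_⟩
  · have h := card_flags_eq_sum 𝓑 Finset.univ (fun _ => True) (fun _ => True) (by simp)
    rw [Nat.card_congr (Equiv.subtypeUnivEquiv fun _ => trivial)] at h
    simpa [hBs, hcard] using h
  · rw [card_flags_through d 𝓑 hB hBreg Finset.univ x.1.1 _ (by simp),
      Finset.card_erase_of_mem (Finset.mem_univ _), Finset.card_univ, hcard, mul_comm, hdn]
  · rw [card_flags_eq_sum 𝓑 x.1.2 (fun _ => True) _ (by simp)]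
    simp [hBs, (hBl _ _ x.2).2]
  · rw [card_flags_through d 𝓑 hB hBreg x.1.2 x.1.1 _ (fun _ => and_comm),
      Finset.erase_eq_of_notMem (hB _ _ x.2), (hBl _ _ x.2).2]
  · rw [card_flags_through d 𝓑 hB hBreg y.1.2 x.1.1 _ (fun _ => and_comm),
      Finset.card_erase_of_mem hxy, (hBl _ _ y.2).2]
  · rw [card_flags_through d 𝓑 hB hBreg y.1.2 x.1.1 _ (fun _ => and_comm),
      Finset.erase_eq_of_notMem hxy, (hBl _ _ y.2).2]
end

section
/- Construction II with d = 1, first graph. Let D₁ be the directed graph on the vertex set V = {(i, B) : i ∈ P, B ∈ 𝓑_i}, with adjacency (i, B) → (j, B′) if and only if i ∈ B′. Then D₁ is a directed strongly regular graph with parameters (v, k, t, λ, μ) = (ls² + s, ls, l, l − 1, l). -/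
/-- The pairs `(j, B)` with `B ∈ 𝓑 j`, `j ∈ S` and `i ∈ B` correspond to the points
`j ∈ S` other than `i`. -/
lemma card_flags_through_point {α : Type} [DecidableEq α]
    (𝓑 : α → Finset (Finset α))
    (hnot : ∀ i : α, ∀ B ∈ 𝓑 i, i ∉ B)
    (hpart : ∀ i x : α, x ≠ i → ∃! B, B ∈ 𝓑 i ∧ x ∈ B) (i : α) (S : Finset α) :
    Nat.card {y : {x : α × Finset α // x.2 ∈ 𝓑 x.1} // i ∈ y.1.2 ∧ y.1.1 ∈ S} =
      (S.erase i).card := by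
  have hne (y : {x : α × Finset α // x.2 ∈ 𝓑 x.1}) (hy : i ∈ y.1.2) : y.1.1 ≠ i := by
    rintro rfl
    exact hnot _ _ y.2 hy
  let f : {y : {x : α × Finset α // x.2 ∈ 𝓑 x.1} // i ∈ y.1.2 ∧ y.1.1 ∈ S} → S.erase i :=
    fun y => ⟨y.1.1.1, Finset.mem_erase.2 ⟨hne y.1 y.2.1, y.2.2⟩⟩
  have hf : Function.Bijective f := by
    constructor
    · rintro ⟨⟨⟨j, B⟩, hB⟩, hi, hj⟩ ⟨⟨⟨j', B'⟩, hB'⟩, hi', hj'⟩ h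
      obtain rfl : j = j' := congrArg Subtype.val h
      obtain rfl : B = B' :=
        (hpart j i (hne ⟨(j, B), hB⟩ hi).symm).unique ⟨hB, hi⟩ ⟨hB', hi'⟩
      rfl
    · rintro ⟨j, hj⟩
      obtain ⟨hji, hjS⟩ := Finset.mem_erase.1 hj
      obtain ⟨B, ⟨hB, hiB⟩, -⟩ := hpart j i hji.symm
      exact ⟨⟨⟨(j, B), hB⟩, hiB, hjS⟩, rfl⟩
  rw [Nat.card_congr (Equiv.ofBijective f hf), Nat.card_eq_fintype_card, Fintype.card_coe]

/-- If every `𝓑 j` has `s` members, there are `|S| * s` pairs `(j, B)` with `j ∈ S` and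
`B ∈ 𝓑 j`. -/
lemma card_flags_over {α : Type} (𝓑 : α → Finset (Finset α)) (s : ℕ)
    (hs : ∀ i : α, (𝓑 i).card = s) (S : Finset α) :
    Nat.card {y : {x : α × Finset α // x.2 ∈ 𝓑 x.1} // y.1.1 ∈ S} = S.card * s := by
  let e : {y : {x : α × Finset α // x.2 ∈ 𝓑 x.1} // y.1.1 ∈ S} ≃ S.sigma 𝓑 :=
    { toFun := fun y => ⟨⟨y.1.1.1, y.1.1.2⟩, Finset.mem_sigma.2 ⟨y.2, y.1.2⟩⟩
      invFun := fun z =>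
        ⟨⟨(z.1.1, z.1.2), (Finset.mem_sigma.1 z.2).2⟩, (Finset.mem_sigma.1 z.2).1⟩
      left_inv := fun _ => rfl
      right_inv := fun _ => rfl }
  rw [Nat.card_congr e, Nat.card_eq_fintype_card, Fintype.card_coe, Finset.card_sigma]
  simp [hs]

/-- **Construction II with `d = 1`, first graph `D₁`.**  Let `l, s` be positive
integers and let `P` be the finite type `α` with `ls + 1` elements; for each
`i ∈ P`, `𝓑 i` is a partition of `P \ {i}` into `s` blocks of size `l`.  The
vertices are the pairs `(i, B)` with `B ∈ 𝓑 i`, and `(i,B) → (j,B')` iff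
`i ∈ B'`.  This directed graph is a DSRG with parameters
`(ls² + s, ls, l, l − 1, l)`. -/
theorem constructionII_d_eq_one_D1_dsrg
    {α : Type} [Fintype α] [DecidableEq α]
    (l s : ℕ) (hl : 0 < l) (hs : 0 < s)
    (hcard : Fintype.card α = l * s + 1)
    (𝓑 : α → Finset (Finset α))
    (hBs : ∀ i : α, (𝓑 i).card = s)
    (hBl : ∀ i : α, ∀ B ∈ 𝓑 i, i ∉ B ∧ B.card = l)
    (hBpart : ∀ i x : α, x ≠ i → ∃! B, B ∈ 𝓑 i ∧ x ∈ B) :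
    IsDSRG (V := {x : α × Finset α // x.2 ∈ 𝓑 x.1})
      (fun x y => x.1.1 ∈ y.1.2)
      (l * s ^ 2 + s) (l * s) l (l - 1) l := by
  have through := card_flags_through_point 𝓑 (fun i B hB => (hBl i B hB).1) hBpart
  have above := card_flags_over 𝓑 s hBs
  refine ⟨inferInstance, fun x => (hBl _ _ x.2).1, ?_, fun x => ?_, fun x => ?_, fun x => ?_,
    fun x y _ hxy => ?_, fun x y _ hxy => ?_⟩
  · have h := above Finset.univ
    rw [Finset.card_univ, hcard, Nat.card_congr (Equiv.subtypeUnivEquiv fun _ =>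
      Finset.mem_univ _)] at h
    rw [h]
    ring
  · simpa [hcard] using through x.1.1 Finset.univ
  · rw [above x.1.2, (hBl _ _ x.2).2]
  · rw [through x.1.1 x.1.2, Finset.erase_eq_of_notMem (hBl _ _ x.2).1, (hBl _ _ x.2).2]
  · rw [through x.1.1 y.1.2, Finset.card_erase_of_mem hxy, (hBl _ _ y.2).2]
  · rw [through x.1.1 y.1.2, Finset.erase_eq_of_notMem hxy, (hBl _ _ y.2).2]
end

section
/- Construction II with d = 1, second graph. Let D₂ be the directed graph on the vertex set V = {(i, B) : i ∈ P, B ∈ 𝓑_i}, with adjacency (i, B) → (j, B′) if and only if either i ∈ B′, or i = j and B ≠ B′. Then D₂ is a directed strongly regular graph with parameters (v, k, t, λ, μ) = (ls² + s, ls + s − 1, l + s − 1, l + s − 2, l + 1). -/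
open scoped Classical in
/-- Counting flags `(h, C)`, `C ∈ 𝓑 h`, fibrewise over `h`, when the fibre count is `a` on `S`,
`b` at `j ∉ S` and zero elsewhere. -/
lemma natCard_flag_eq {α : Type} [Fintype α] (𝓑 : α → Finset (Finset α))
    (p : α → Finset α → Prop) (S : Finset α) (j : α) (a b : ℕ) (hj : j ∉ S)
    (hS : ∀ h ∈ S, ((𝓑 h).filter (p h)).card = a)
    (hb : ((𝓑 j).filter (p j)).card = b)
    (h0 : ∀ h, h ∉ S → h ≠ j → ∀ C ∈ 𝓑 h, ¬ p h C) :
    Nat.card {y : {x : α × Finset α // x.2 ∈ 𝓑 x.1} // p y.1.1 y.1.2} = S.card * a + b := by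
  let e : {y : {x : α × Finset α // x.2 ∈ 𝓑 x.1} // p y.1.1 y.1.2} ≃
      (Σ h : α, {C // C ∈ (𝓑 h).filter (p h)}) :=
    { toFun := fun y => ⟨y.1.1.1, y.1.1.2, Finset.mem_filter.2 ⟨y.1.2, y.2⟩⟩
      invFun := fun z => ⟨⟨(z.1, z.2.1), (Finset.mem_filter.1 z.2.2).1⟩,
        (Finset.mem_filter.1 z.2.2).2⟩
      left_inv := fun _ => rfl
      right_inv := fun _ => rfl }
  rw [Nat.card_congr e, Nat.card_eq_fintype_card, Fintype.card_sigma]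
  have key : ∀ h, Fintype.card {C // C ∈ (𝓑 h).filter (p h)} =
      (if h ∈ S then a else 0) + (if h = j then b else 0) := by
    intro h
    rw [Fintype.card_coe]
    by_cases hh : h ∈ S
    · have : h ≠ j := fun e => hj (e ▸ hh)
      simp [hh, this, hS h hh]
    · by_cases hhj : h = j
      · subst hhj
        simp [hh, hb]
      · simpa [hh, hhj, Finset.filter_eq_empty_iff] using h0 h hh hhj
  rw [Finset.sum_congr rfl fun h _ => key h]
  simp [Finset.sum_add_distrib]

/-- **Construction II with `d = 1`, second graph `D₂`.**  Let `l, s` be positive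
integers and let `P` be the finite type `α` with `ls + 1` elements; for each
`i ∈ P`, `𝓑 i` is a partition of `P \ {i}` into `s` blocks of size `l`.  The
vertices are the pairs `(i, B)` with `B ∈ 𝓑 i`, and `(i,B) → (j,B')` iff
`i ∈ B'`, or `i = j` and `B ≠ B'`.  This directed graph is a DSRG with parameters
`(ls² + s, ls + s − 1, l + s − 1, l + s − 2, l + 1)`. -/
theorem constructionII_d_eq_one_D2_dsrg
    {α : Type} [Fintype α] [DecidableEq α]
    (l s : ℕ) (hl : 0 < l) (hs : 0 < s)
    (hcard : Fintype.card α = l * s + 1)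
    (𝓑 : α → Finset (Finset α))
    (hBs : ∀ i : α, (𝓑 i).card = s)
    (hBl : ∀ i : α, ∀ B ∈ 𝓑 i, i ∉ B ∧ B.card = l)
    (hBpart : ∀ i x : α, x ≠ i → ∃! B, B ∈ 𝓑 i ∧ x ∈ B) :
    IsDSRG (V := {x : α × Finset α // x.2 ∈ 𝓑 x.1})
      (fun x y => x.1.1 ∈ y.1.2 ∨ (x.1.1 = y.1.1 ∧ x.1.2 ≠ y.1.2))
      (l * s ^ 2 + s) (l * s + s - 1) (l + s - 1) (l + s - 2) (l + 1) := by
  classical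
  have one : ∀ h i : α, h ≠ i → ((𝓑 h).filter (fun C => i ∈ C)).card = 1 := by
    intro h i hne
    obtain ⟨B, hB, hu⟩ := hBpart h i hne.symm
    rw [Finset.card_eq_one]
    refine ⟨B, ?_⟩
    ext C
    simp only [Finset.mem_filter, Finset.mem_singleton]
    exact ⟨hu C, fun e => e ▸ hB⟩
  have other : ∀ i, ∀ B ∈ 𝓑 i, ((𝓑 i).erase B).card = s - 1 := by
    intro i B hB
    rw [Finset.card_erase_of_mem hB, hBs]
  have uniq : ∀ h i : α, ∀ C ∈ 𝓑 h, ∀ C' ∈ 𝓑 h, i ∈ C → i ∈ C' → C = C' := by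
    intro h i C hC C' hC' hi hi'
    have hne : i ≠ h := fun e => (hBl h C hC).1 (e ▸ hi)
    exact (hBpart h i hne).unique ⟨hC, hi⟩ ⟨hC', hi'⟩
  have irr : ∀ i, ∀ B ∈ 𝓑 i, i ∉ B := fun i B hB => (hBl i B hB).1
  refine ⟨inferInstance, ?_, ?_, ?_, ?_, ?_, ?_, ?_⟩
  · rintro ⟨⟨i, B⟩, hB⟩
    simpa using irr i B hB
  · have : Nonempty α := Fintype.card_pos_iff.1 (by omega)
    obtain ⟨i⟩ := this
    have := natCard_flag_eq 𝓑 (fun _ _ => True) (Finset.univ.erase i) i s s (by simp)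
      (by simp [hBs]) (by simp [hBs]) (by simp)
    rw [Nat.card_congr (Equiv.subtypeUnivEquiv fun _ => trivial)] at this
    rw [this, Finset.card_erase_of_mem (Finset.mem_univ _), Finset.card_univ, hcard,
      Nat.add_sub_cancel]
    ring
  · rintro ⟨⟨i, B⟩, hB⟩
    refine (natCard_flag_eq 𝓑 (fun h C => i ∈ C ∨ (i = h ∧ B ≠ C)) (Finset.univ.erase i) i 1
      (s - 1) (by simp) ?_ ?_ (by simp)).trans ?_
    · intro h hh
      rw [← one h i (Finset.ne_of_mem_erase hh)]
      congr 1
      grind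
    · rw [← other i B hB]
      congr 1
      grind
    · rw [Finset.card_erase_of_mem (Finset.mem_univ _), Finset.card_univ, hcard]
      omega
  · rintro ⟨⟨j, B⟩, hB⟩
    refine (natCard_flag_eq 𝓑 (fun h C => h ∈ B ∨ (h = j ∧ C ≠ B)) B j s
      (s - 1) (irr j B hB) ?_ ?_ (by grind)).trans ?_
    · intro h hh
      simp [hh, hBs]
    · rw [← other j B hB]
      congr 1
      grind
    · rw [(hBl j B hB).2]
      omega
  · rintro ⟨⟨i, B⟩, hB⟩
    refine (natCard_flag_eq 𝓑
      (fun h C => (i ∈ C ∨ (i = h ∧ B ≠ C)) ∧ (h ∈ B ∨ (h = i ∧ C ≠ B))) B i 1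
      (s - 1) (irr i B hB) ?_ ?_ (by grind)).trans ?_
    · intro h hh
      rw [← one h i (fun e => irr i B hB (e ▸ hh))]
      congr 1
      grind
    · rw [← other i B hB]
      congr 1
      grind
    · rw [(hBl i B hB).2]
      omega
  · rintro ⟨⟨i, B⟩, hB⟩ ⟨⟨j, B'⟩, hB'⟩ - (hadj | ⟨hij, hne⟩)
    · dsimp only at hadj hB hB'
      have hcardB := (hBl j B' hB').2
      refine (natCard_flag_eq 𝓑
        (fun h C => (i ∈ C ∨ (i = h ∧ B ≠ C)) ∧ (h ∈ B' ∨ (h = j ∧ C ≠ B'))) (B'.erase i) i 1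
        (s - 1) (by simp) ?_ ?_ (by grind)).trans ?_
      · intro h hh
        rw [← one h i (Finset.ne_of_mem_erase hh)]
        congr 1
        grind
      · rw [← other i B hB]
        congr 1
        grind
      · rw [Finset.card_erase_of_mem hadj, hcardB]
        omega
    · dsimp only at hij hne hB hB'
      subst hij
      refine (natCard_flag_eq 𝓑
        (fun h C => (i ∈ C ∨ (i = h ∧ B ≠ C)) ∧ (h ∈ B' ∨ (h = i ∧ C ≠ B'))) B' i 1
        (s - 2) (irr i B' hB') ?_ ?_ (by grind)).trans ?_
      · intro h hh
        rw [← one h i (fun e => irr i B' hB' (e ▸ hh))]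
        congr 1
        grind
      · have : (((𝓑 i).erase B).erase B').card = s - 2 := by
          rw [Finset.card_erase_of_mem (by grind), other i B hB]
          omega
        rw [← this]
        congr 1
        grind
      · have : 1 < (𝓑 i).card := Finset.one_lt_card.2 ⟨B, hB, B', hB', hne⟩
        rw [hBs] at this
        rw [(hBl i B' hB').2]
        omega
  · rintro ⟨⟨i, B⟩, hB⟩ ⟨⟨j, B'⟩, hB'⟩ hxy hadj
    dsimp only at hadj hB hB'
    have hi : i ∉ B' := fun h => hadj (Or.inl h)
    have hij : i ≠ j := by
      rintro rfl
      refine hadj (Or.inr ⟨rfl, ?_⟩)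
      rintro rfl
      exact hxy rfl
    refine (natCard_flag_eq 𝓑
      (fun h C => (i ∈ C ∨ (i = h ∧ B ≠ C)) ∧ (h ∈ B' ∨ (h = j ∧ C ≠ B'))) B' j 1
      1 (irr j B' hB') ?_ ?_ (by grind)).trans ?_
    · intro h hh
      rw [← one h i (fun e => hi (e ▸ hh))]
      congr 1
      grind
    · rw [← one j i hij.symm]
      congr 1
      grind
    · rw [(hBl j B' hB').2]
      omega
end

section
/- Let r, a, b be integers greater than 1 and set q = 1 + ab. Then for every positive integer m there exists a directed strongly regular graph with parameters (v, k, t, λ, μ) = (m·rq²b, m·rq(q−1), m(rqa − ra + a), m(q(a−1) + (r−1)(q−1)a), m(rqa − ra + a)). -/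
/-- On a set of `1 + a * b` elements, the complement of every point `x` can be partitioned into
`b` blocks `{z | I x β z}` of size `a`. -/
theorem exists_complement_partition (a b : ℕ) :
    ∃ I : Fin (1 + a * b) → Fin b → Fin (1 + a * b) → Prop,
      (∀ x β, Nat.card {z // I x β z} = a) ∧
      (∀ x z, x ≠ z → ∃! β, I x β z) ∧ ∀ x β, ¬ I x β x := by
  have e (x : Fin (1 + a * b)) : {z // z ≠ x} ≃ Fin a × Fin b :=
    Fintype.equivOfCardEq (by simp)
  refine ⟨fun x β z => ∃ h : z ≠ x, (e x ⟨z, h⟩).2 = β, fun x β => ?_, fun x z h => ?_, ?_⟩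
  · have f : {z // ∃ h : z ≠ x, (e x ⟨z, h⟩).2 = β} ≃ Fin a :=
      { toFun := fun z => (e x ⟨z.1, z.2.1⟩).1
        invFun := fun s => ⟨((e x).symm (s, β)).1, ((e x).symm (s, β)).2, by simp⟩
        left_inv := by
          rintro ⟨z, h, rfl⟩
          simp
        right_inv := fun s => by simp }
    simpa using Nat.card_congr f
  · exact ⟨_, ⟨h.symm, rfl⟩, fun β ⟨_, h⟩ => h.symm⟩
  · rintro x β ⟨h, -⟩
    exact h rfl

open Classical in
/-- The indicator of a proposition. -/
noncomputable def propInd (p : Prop) : ℕ := if p then 1 else 0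

theorem propInd_of_true {p : Prop} (h : p) : propInd p = 1 := if_pos h

theorem propInd_of_not {p : Prop} (h : ¬ p) : propInd p = 0 := if_neg h

theorem propInd_and (p q : Prop) : propInd (p ∧ q) = propInd p * propInd q := by
  by_cases hp : p <;> by_cases hq : q <;> simp [propInd, hp, hq]

theorem Nat.card_subtype_eq_sum {V : Type*} [Fintype V] (P : V → Prop) :
    Nat.card {y // P y} = ∑ y, propInd (P y) := by
  classical
  simp only [propInd]
  rw [Nat.card_eq_fintype_card, Fintype.card_subtype, Finset.card_filter]

open Classical in
/-- The point of a vertex of class `j` with points `x, y` that is seen from the class `i`. -/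
noncomputable def seenPoint {R Q : Type*} (i j : R) (x y : Q) : Q := if i = j then x else y

/-- The digraph on the vertices `(i, x, y, β, s)` with an arc whenever the point of the head seen
from the class of the tail lies in the block `(x, β)` of the tail. -/
def BlockAdj {R Q B M : Type*} (I : Q → B → Q → Prop) (u v : R × Q × Q × B × M) : Prop :=
  I u.2.1 u.2.2.2.1 (seenPoint u.1 v.1 v.2.1 v.2.2.1)

section BlockAdj

variable {R Q B M : Type*} {I : Q → B → Q → Prop}

theorem sum_propInd_block [Fintype B] (h : ∀ x z, x ≠ z → ∃! β, I x β z)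
    (h0 : ∀ x β, ¬ I x β x) (x z : Q) : ∑ β, propInd (I x β z) = propInd (x ≠ z) := by
  by_cases hxz : x = z
  · subst hxz
    simp [propInd, h0]
  · obtain ⟨β, hβ, hu⟩ := h x z hxz
    rw [Finset.sum_eq_single β (fun γ _ hγ => propInd_of_not fun hI => hγ (hu γ hI)) (by simp),
      propInd_of_true hβ, propInd_of_true hxz]

variable [Fintype Q]

theorem sum_propInd_ne (z : Q) : ∑ x, propInd (x ≠ z) = Fintype.card Q - 1 := by
  classical
  simp [← Nat.card_subtype_eq_sum]

open Classical in
theorem sum_propInd_mul_propInd_ne (p : Q → Prop) (z : Q) :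
    ∑ y, propInd (p y) * propInd (y ≠ z) = ∑ y, propInd (p y) - propInd (p z) := by
  rw [← Finset.add_sum_erase _ _ (Finset.mem_univ z),
    ← Finset.add_sum_erase _ (fun y => propInd (p y)) (Finset.mem_univ z),
    Nat.add_sub_cancel_left, propInd_of_not (not_not.2 rfl), mul_zero, zero_add]
  exact Finset.sum_congr rfl fun y hy => by
    rw [propInd_of_true (Finset.ne_of_mem_erase hy), mul_one]

variable [Fintype R] [Fintype B] [Fintype M] {a : ℕ}

theorem card_blockAdj_out (hc : ∀ x β, Nat.card {z // I x β z} = a) (u : R × Q × Q × B × M) :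
    Nat.card {v // BlockAdj I u v} =
      Fintype.card M * (Fintype.card R * Fintype.card Q * (a * Fintype.card B)) := by
  simp only [Nat.card_subtype_eq_sum] at hc
  have hclass (i : R) : ∑ x : Q, ∑ y : Q,
      propInd (I u.2.1 u.2.2.2.1 (seenPoint u.1 i x y)) = Fintype.card Q * a := by
    unfold seenPoint
    split_ifs
    · rw [Finset.sum_comm]
      simp [hc]
    · simp [hc]
  simp only [Nat.card_subtype_eq_sum, BlockAdj, Fintype.sum_prod_type, Finset.sum_const,
    Finset.card_univ, smul_eq_mul, ← Finset.mul_sum, hclass, Fintype.card_prod]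
  ring

theorem card_blockAdj_in (h : ∀ x z, x ≠ z → ∃! β, I x β z) (h0 : ∀ x β, ¬ I x β x)
    (v : R × Q × Q × B × M) :
    Nat.card {u // BlockAdj I u v} =
      Fintype.card M * (Fintype.card R * Fintype.card Q * (Fintype.card Q - 1)) := by
  simp only [Nat.card_subtype_eq_sum, BlockAdj, Fintype.sum_prod_type, Finset.sum_const,
    Finset.card_univ, smul_eq_mul, ← Finset.mul_sum, sum_propInd_block h h0, sum_propInd_ne]
  ring

open Classical in
/-- The number of directed paths of length two between two vertices, equal or not. -/
theorem card_blockAdj_path (hc : ∀ x β, Nat.card {z // I x β z} = a)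
    (h : ∀ x z, x ≠ z → ∃! β, I x β z) (h0 : ∀ x β, ¬ I x β x) (u v : R × Q × Q × B × M) :
    Nat.card {w // BlockAdj I u w ∧ BlockAdj I w v} =
      Fintype.card M * (Fintype.card Q * (a - propInd (BlockAdj I u v)) +
        (Fintype.card R - 1) * (Fintype.card Q - 1) * a) := by
  simp only [Nat.card_subtype_eq_sum] at hc
  have hclass (k : R) : ∑ x : Q, ∑ y : Q,
      propInd (I u.2.1 u.2.2.2.1 (seenPoint u.1 k x y)) *
        propInd (x ≠ seenPoint k v.1 v.2.1 v.2.2.1) =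
      if u.1 = k then Fintype.card Q * (a - propInd (BlockAdj I u v))
      else (Fintype.card Q - 1) * a := by
    by_cases hk : u.1 = k
    · subst hk
      simp only [seenPoint, if_true, Finset.sum_const, Finset.card_univ, smul_eq_mul, ← Finset.mul_sum,
        sum_propInd_mul_propInd_ne, hc, BlockAdj]
    · simp only [seenPoint, if_neg hk, ← Finset.sum_mul, hc, sum_propInd_ne, mul_comm a]
  have hpaths : Nat.card {w : R × Q × Q × B × M // BlockAdj I u w ∧ BlockAdj I w v} =
      Fintype.card M * ∑ k : R, if u.1 = k then
        Fintype.card Q * (a - propInd (BlockAdj I u v)) else (Fintype.card Q - 1) * a := by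
    simp only [← hclass]
    simp only [Nat.card_subtype_eq_sum, propInd_and, BlockAdj, Fintype.sum_prod_type,
      Finset.sum_const, Finset.card_univ, smul_eq_mul, ← Finset.mul_sum, sum_propInd_block h h0,
      mul_left_comm _ (Fintype.card M)]
  rw [hpaths, ← Finset.add_sum_erase _ _ (Finset.mem_univ u.1), if_pos rfl,
    Finset.sum_congr rfl fun k hk => if_neg (Finset.ne_of_mem_erase hk).symm]
  simp [mul_assoc]

end BlockAdj

/-- Let `r, a, b` be integers greater than 1 and set `q = 1 + ab`.  Then for every
positive integer `m` there exists a directed strongly regular graph with parameters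
`(m·rq²b, m·rq(q−1), m(rqa − ra + a), m(q(a−1) + (r−1)(q−1)a), m(rqa − ra + a))`
(here `q − 1 = ab`). -/
theorem exists_dsrg_multiple_constructionI
    (r a b m : ℕ) (hr : 1 < r) (ha : 1 < a) (hb : 1 < b) (hm : 0 < m) :
    ∃ (V : Type) (Adj : V → V → Prop),
      IsDSRG Adj
        (m * (r * (1 + a * b) ^ 2 * b))
        (m * (r * (1 + a * b) * (a * b)))
        (m * (r * (1 + a * b) * a - r * a + a))
        (m * ((1 + a * b) * (a - 1) + (r - 1) * (a * b) * a))
        (m * (r * (1 + a * b) * a - r * a + a)) := by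
  obtain ⟨I, hc, h, h0⟩ := exists_complement_partition a b
  have hloop (u : Fin r × Fin (1 + a * b) × Fin (1 + a * b) × Fin b × Fin m) :
      ¬ BlockAdj I u u := by simp [BlockAdj, seenPoint, h0]
  have hmu : r * (1 + a * b) * a - r * a + a = (1 + a * b) * a + (r - 1) * (a * b) * a := by
    obtain ⟨s, rfl⟩ := Nat.exists_eq_add_of_lt hr
    have : (1 + s + 1) * (1 + a * b) * a = (1 + s + 1) * (a * b) * a + (1 + s + 1) * a := by ring
    rw [this, Nat.add_sub_cancel, Nat.add_sub_cancel]
    ring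
  refine ⟨Fin r × Fin (1 + a * b) × Fin (1 + a * b) × Fin b × Fin m, BlockAdj I, inferInstance,
    hloop, ?_, fun u => ?_, fun u => ?_, fun u => ?_, fun u v _ huv => ?_, fun u v _ huv => ?_⟩
  · simp; ring
  · simp [card_blockAdj_out hc]
  · simp [card_blockAdj_in h h0]
  · simp [card_blockAdj_path hc h h0, propInd_of_not (hloop u), hmu]
  · simp [card_blockAdj_path hc h h0, propInd_of_true huv]
  · simp [card_blockAdj_path hc h h0, propInd_of_not huv, hmu]
end

section
/- Construction II, m-fold multiple of the first graph. For a positive integer m, let D be the directed graph on the vertex set V × {1, …, m}, where V = {(g, B) : g ∈ P, B ∈ 𝓑_g}, with adjacency ((g, B), c) → ((g′, B′), c′) if and only if g ∈ B′. Then D is a directed strongly regular graph with parameters (v, k, t, λ, μ) = (mns, mls, mld, m(l−1)d, mld). -/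
/-- Counting the vertices `((g, B), c)` with `R g B`, one point `g` at a time. -/
theorem natCard_flag_prod_fin {α : Type} [Fintype α] (m : ℕ) (𝓑 : α → Finset (Finset α))
    (R : α → Finset α → Prop) [∀ i, DecidablePred (R i)] :
    Nat.card {z : {x : α × Finset α // x.2 ∈ 𝓑 x.1} × Fin m // R z.1.1.1 z.1.1.2} =
      m * ∑ i, ((𝓑 i).filter (R i)).card := by
  let e : {z : {x : α × Finset α // x.2 ∈ 𝓑 x.1} × Fin m // R z.1.1.1 z.1.1.2} ≃
      Fin m × (Σ i, {B // B ∈ (𝓑 i).filter (R i)}) :=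
    { toFun := fun z => (z.1.2, ⟨z.1.1.1.1, z.1.1.1.2, Finset.mem_filter.2 ⟨z.1.1.2, z.2⟩⟩)
      invFun := fun w => ⟨(⟨(w.2.1, w.2.2.1), (Finset.mem_filter.1 w.2.2.2).1⟩, w.1),
        (Finset.mem_filter.1 w.2.2.2).2⟩
      left_inv := fun _ => rfl
      right_inv := fun _ => rfl }
  rw [Nat.card_congr e, Nat.card_prod, Nat.card_fin, Nat.card_sigma]
  simp only [Nat.card_eq_fintype_card, Fintype.card_coe]

/-- If the count at `i` is `c` for `i ∈ S` and no block qualifies elsewhere, the total is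
`m * (|S| * c)`. -/
theorem natCard_flag_prod_fin_of_const {α : Type} [Fintype α] [DecidableEq α] (m : ℕ)
    (𝓑 : α → Finset (Finset α)) (R : α → Finset α → Prop) [∀ i, DecidablePred (R i)]
    (S : Finset α) (c : ℕ) (hS : ∀ i ∈ S, ((𝓑 i).filter (R i)).card = c)
    (hS' : ∀ i ∉ S, ∀ B ∈ 𝓑 i, ¬ R i B) :
    Nat.card {z : {x : α × Finset α // x.2 ∈ 𝓑 x.1} × Fin m // R z.1.1.1 z.1.1.2} =
      m * (S.card * c) := by
  rw [natCard_flag_prod_fin, ← Finset.sum_subset (Finset.subset_univ S),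
    Finset.sum_congr rfl hS, Finset.sum_const, smul_eq_mul]
  intro i _ hi
  rw [Finset.card_eq_zero, Finset.filter_eq_empty_iff]
  exact fun B hB => hS' i hi B hB

/-- **Construction II, `m`-fold multiple of the first graph.**  Let `n, d, l, s` be
positive integers with `d(n−1) = ls`, and let `𝓑 i` (for each point `i` of the
`n`-element set `α`) be a family of `s` distinct blocks, each an `l`-subset of
`P \ {i}`, every point of `P \ {i}` lying in exactly `d` of them.  The vertices
are the pairs `((g, B), c)` with `B ∈ 𝓑 g` and `c ∈ {1, …, m}`, and
`((g,B),c) → ((g',B'),c')` iff `g ∈ B'`.  This directed graph is a DSRG with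
parameters `(mns, mls, mld, m(l−1)d, mld)`. -/
theorem constructionII_D1_multiple_dsrg
    {α : Type} [Fintype α] [DecidableEq α]
    (n d l s m : ℕ) (hn : 0 < n) (hd : 0 < d) (hl : 0 < l) (hs : 0 < s) (hm : 0 < m)
    (hdn : d * (n - 1) = l * s)
    (hcard : Fintype.card α = n)
    (𝓑 : α → Finset (Finset α))
    (hBs : ∀ i : α, (𝓑 i).card = s)
    (hBl : ∀ i : α, ∀ B ∈ 𝓑 i, i ∉ B ∧ B.card = l)
    (hBreg : ∀ i x : α, x ≠ i → ((𝓑 i).filter (fun B => x ∈ B)).card = d) :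
    IsDSRG (V := {x : α × Finset α // x.2 ∈ 𝓑 x.1} × Fin m)
      (fun x y => x.1.1.1 ∈ y.1.1.2)
      (m * (n * s)) (m * (l * s)) (m * (l * d)) (m * ((l - 1) * d)) (m * (l * d)) := by
  have paths (g : α) (T : Finset α) :
      Nat.card {z : {x : α × Finset α // x.2 ∈ 𝓑 x.1} × Fin m //
        g ∈ z.1.1.2 ∧ z.1.1.1 ∈ T} = m * ((T.erase g).card * d) := by
    refine natCard_flag_prod_fin_of_const m 𝓑 (fun i B => g ∈ B ∧ i ∈ T) (T.erase g) d ?_ ?_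
    · intro i hi
      obtain ⟨hig, hiT⟩ := Finset.mem_erase.1 hi
      simpa only [hiT, and_true] using hBreg i g hig.symm
    · rintro i hi B hB ⟨hgB, hiT⟩
      refine hi (Finset.mem_erase.2 ⟨?_, hiT⟩)
      rintro rfl
      exact (hBl i B hB).1 hgB
  refine ⟨inferInstance, ?_, ?_, ?_, ?_, ?_, ?_, ?_⟩
  · rintro ⟨⟨⟨g, B⟩, hB⟩, c⟩
    exact (hBl g B hB).1
  · have h := natCard_flag_prod_fin_of_const m 𝓑 (fun _ _ => True) Finset.univ s
      (by simpa using hBs) (by simp)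
    rw [Finset.card_univ, hcard] at h
    rw [← h]
    exact (Nat.card_congr (Equiv.subtypeUnivEquiv fun _ => trivial)).symm
  · rintro ⟨⟨⟨g, B⟩, hB⟩, c⟩
    have h := paths g Finset.univ
    simp only [Finset.mem_univ, and_true, Finset.card_erase_of_mem, Finset.card_univ,
      hcard] at h
    rw [h, mul_comm (n - 1), hdn]
  · rintro ⟨⟨⟨g, B⟩, hB⟩, c⟩
    rw [← (hBl g B hB).2]
    refine natCard_flag_prod_fin_of_const m 𝓑 (fun i _ => i ∈ B) B s ?_ fun i hi _ _ => hi
    intro i hi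
    simpa only [hi, Finset.filter_true] using hBs i
  · rintro ⟨⟨⟨g, B⟩, hB⟩, c⟩
    have h := paths g B
    rw [Finset.erase_eq_of_notMem (hBl g B hB).1, (hBl g B hB).2] at h
    exact h
  · rintro ⟨⟨⟨g, B⟩, hB⟩, c⟩ ⟨⟨⟨g', B'⟩, hB'⟩, c'⟩ - hgB'
    rw [← (hBl g' B' hB').2, ← Finset.card_erase_of_mem hgB']
    exact paths g B'
  · rintro ⟨⟨⟨g, B⟩, hB⟩, c⟩ ⟨⟨⟨g', B'⟩, hB'⟩, c'⟩ - hgB'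
    have h := paths g B'
    rwa [Finset.erase_eq_of_notMem hgB', (hBl g' B' hB').2] at h
end

section
/- Construction II, m-fold multiple of the second graph. For a positive integer m, let D be the directed graph on the vertex set V × {1, …, m}, where V = {(g, B) : g ∈ P, B ∈ 𝓑_g}, with adjacency ((g, B), c) → ((g′, B′), c′) if and only if either g ∈ B′, or g = g′ and (B, c) ≠ (B′, c′). Then D is a directed strongly regular graph with parameters (v, k, t, λ, μ) = (mns, m(ls + s) − 1, m(ld + s) − 1, m(ld + s) − 2, m(l+1)d). -/
/-- Removing the loops from a reflexive relation `C` whose square counts are `a` on `C` and `b` off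
`C` gives a directed strongly regular graph. -/
theorem IsDSRG.of_reflexive {V : Type} [Finite V] (C : V → V → Prop) (hC : ∀ x, C x x)
    {v k a b : ℕ} (hv : Nat.card V = v)
    (hout : ∀ x, Nat.card {y // C x y} = k) (hin : ∀ x, Nat.card {y // C y x} = k)
    (hpos : ∀ x y, C x y → Nat.card {z // C x z ∧ C z y} = a)
    (hneg : ∀ x y, ¬ C x y → Nat.card {z // C x z ∧ C z y} = b) :
    IsDSRG (fun x y => C x y ∧ x ≠ y) v (k - 1) (a - 1) (a - 2) b := by
  classical
  have := Fintype.ofFinite V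
  simp only [Nat.card_eq_fintype_card, Fintype.card_subtype] at hout hin hpos hneg
  refine ⟨inferInstance, fun x h => h.2 rfl, hv, fun x => ?_, fun x => ?_, fun x => ?_,
    fun x y hxy h => ?_, fun x y hxy h => ?_⟩
  all_goals rw [Nat.card_eq_fintype_card, Fintype.card_subtype]
  · rw [← hout x, ← Finset.card_erase_of_mem (a := x) (by simp [hC])]
    congr 1; ext z; simp; tauto
  · rw [← hin x, ← Finset.card_erase_of_mem (a := x) (by simp [hC])]
    congr 1; ext z; simp; tauto
  · rw [← hpos x x (hC x), ← Finset.card_erase_of_mem (a := x) (by simp [hC])]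
    congr 1; ext z; simp; tauto
  · rw [← hpos x y h.1, show ∀ c : ℕ, c - 2 = c - 1 - 1 from fun _ => rfl,
      ← Finset.card_erase_of_mem (a := x) (by simp [hC, h.1]),
      ← Finset.card_erase_of_mem (a := y) (by simp [hC, h.1, hxy.symm])]
    congr 1; ext z; simp; tauto
  · have hCxy : ¬ C x y := fun hc => h ⟨hc, hxy⟩
    rw [← hneg x y hCxy]
    congr 1; ext z
    simp only [Finset.mem_filter, Finset.mem_univ, true_and]
    refine ⟨fun hz => ⟨hz.1.1, hz.2.1⟩, fun hz => ⟨⟨hz.1, ?_⟩, hz.2, ?_⟩⟩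
    · rintro rfl; exact hCxy hz.2
    · rintro rfl; exact hCxy hz.1

/-- Copies of the pairs `(g, B)` with `B ∈ 𝓑 g`, counted fibrewise over `g`. -/
theorem card_block_pairs {α : Type} [Fintype α] (m : ℕ)
    (𝓑 : α → Finset (Finset α)) (p : α → Finset α → Prop) [∀ g, DecidablePred (p g)] :
    Nat.card {z : {x : α × Finset α // x.2 ∈ 𝓑 x.1} × Fin m // p z.1.1.1 z.1.1.2} =
      m * ∑ g, ((𝓑 g).filter (p g)).card := by
  let e : {z : {x : α × Finset α // x.2 ∈ 𝓑 x.1} × Fin m // p z.1.1.1 z.1.1.2} ≃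
      Fin m × Σ g, {B // B ∈ (𝓑 g).filter (p g)} :=
    { toFun := fun z => (z.1.2, ⟨z.1.1.1.1, z.1.1.1.2, Finset.mem_filter.2 ⟨z.1.1.2, z.2⟩⟩)
      invFun := fun w => ⟨(⟨(w.2.1, w.2.2.1), (Finset.mem_filter.1 w.2.2.2).1⟩, w.1),
        (Finset.mem_filter.1 w.2.2.2).2⟩
      left_inv := fun _ => rfl
      right_inv := fun _ => rfl }
  rw [Nat.card_congr e, Nat.card_eq_fintype_card, Fintype.card_prod, Fintype.card_fin,
    Fintype.card_sigma]
  simp only [Fintype.card_coe]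

/-- The number of copies of pairs `(g, B)` with `g ∈ S` and `x ∈ B ∪ {g}`. -/
theorem card_block_pairs_through {α : Type} [Fintype α] [DecidableEq α] {d s : ℕ} (m : ℕ)
    (𝓑 : α → Finset (Finset α)) (hBs : ∀ i : α, (𝓑 i).card = s)
    (hBreg : ∀ i x : α, x ≠ i → ((𝓑 i).filter (fun B => x ∈ B)).card = d)
    (S : Finset α) (x : α) :
    Nat.card {z : {x : α × Finset α // x.2 ∈ 𝓑 x.1} × Fin m //
        (x ∈ z.1.1.2 ∨ x = z.1.1.1) ∧ z.1.1.1 ∈ S} =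
      m * ((S.erase x).card * d + if x ∈ S then s else 0) := by
  rw [card_block_pairs m 𝓑 (fun g B => (x ∈ B ∨ x = g) ∧ g ∈ S)]
  have key : ∀ g, ((𝓑 g).filter (fun B => (x ∈ B ∨ x = g) ∧ g ∈ S)).card =
      (if g ∈ S.erase x then d else 0) + if g = x then (if x ∈ S then s else 0) else 0 := by
    intro g
    by_cases hS : g ∈ S
    · by_cases hg : g = x
      · subst hg; simp [hS, hBs]
      · simp [hS, hg, Ne.symm hg, hBreg g x (Ne.symm hg)]
    · by_cases hg : g = x
      · subst hg; simp [hS]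
      · simp [hS, hg]
  simp only [key, Finset.sum_add_distrib, Finset.sum_ite_mem, Finset.univ_inter,
    Finset.sum_const, smul_eq_mul, Finset.sum_ite_eq', Finset.mem_univ, if_true]

/-- **Construction II, `m`-fold multiple of the second graph.**  Let `n, d, l, s` be
positive integers with `d(n−1) = ls`, and let `𝓑 i` (for each point `i` of the
`n`-element set `α`) be a family of `s` distinct blocks, each an `l`-subset of
`P \ {i}`, every point of `P \ {i}` lying in exactly `d` of them.  The vertices
are the pairs `((g, B), c)` with `B ∈ 𝓑 g` and `c ∈ {1, …, m}`, and
`((g,B),c) → ((g',B'),c')` iff `g ∈ B'`, or `g = g'` and `(B, c) ≠ (B', c')`.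
This directed graph is a DSRG with parameters
`(mns, m(ls + s) − 1, m(ld + s) − 1, m(ld + s) − 2, m(l+1)d)`. -/
theorem constructionII_D2_multiple_dsrg
    {α : Type} [Fintype α] [DecidableEq α]
    (n d l s m : ℕ) (hn : 0 < n) (hd : 0 < d) (hl : 0 < l) (hs : 0 < s) (hm : 0 < m)
    (hdn : d * (n - 1) = l * s)
    (hcard : Fintype.card α = n)
    (𝓑 : α → Finset (Finset α))
    (hBs : ∀ i : α, (𝓑 i).card = s)
    (hBl : ∀ i : α, ∀ B ∈ 𝓑 i, i ∉ B ∧ B.card = l)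
    (hBreg : ∀ i x : α, x ≠ i → ((𝓑 i).filter (fun B => x ∈ B)).card = d) :
    IsDSRG (V := {x : α × Finset α // x.2 ∈ 𝓑 x.1} × Fin m)
      (fun x y => x.1.1.1 ∈ y.1.1.2 ∨
        (x.1.1.1 = y.1.1.1 ∧ (x.1.1.2, x.2) ≠ (y.1.1.2, y.2)))
      (m * (n * s)) (m * (l * s + s) - 1) (m * (l * d + s) - 1) (m * (l * d + s) - 2)
      (m * ((l + 1) * d)) := by
  have hS : ∀ S : Finset α,
      Nat.card {z : {x : α × Finset α // x.2 ∈ 𝓑 x.1} × Fin m // z.1.1.1 ∈ S} =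
        m * (S.card * s) := by
    intro S
    rw [card_block_pairs m 𝓑 (fun g _ => g ∈ S)]
    simp [Finset.filter_const, apply_ite Finset.card, hBs]
  let C : {x : α × Finset α // x.2 ∈ 𝓑 x.1} × Fin m →
      {x : α × Finset α // x.2 ∈ 𝓑 x.1} × Fin m → Prop :=
    fun x y => x.1.1.1 ∈ y.1.1.2 ∨ x.1.1.1 = y.1.1.1
  have hAdj : (fun x y : {x : α × Finset α // x.2 ∈ 𝓑 x.1} × Fin m => x.1.1.1 ∈ y.1.1.2 ∨
      (x.1.1.1 = y.1.1.1 ∧ (x.1.1.2, x.2) ≠ (y.1.1.2, y.2))) =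
      fun x y => C x y ∧ x ≠ y := by
    funext ⟨⟨⟨g, B⟩, hB⟩, c⟩ ⟨⟨⟨g', B'⟩, hB'⟩, c'⟩
    have hg := (hBl g' B' hB').1
    simp only [C, ne_eq, Prod.mk.injEq, Subtype.mk.injEq, eq_iff_iff]
    constructor
    · rintro (h | h)
      · exact ⟨Or.inl h, fun e => hg (e.1.1 ▸ h)⟩
      · exact ⟨Or.inr h.1, fun e => h.2 ⟨e.1.2, e.2⟩⟩
    · rintro ⟨h | h, e⟩
      · exact Or.inl h
      · exact Or.inr ⟨h, fun e' => e ⟨⟨h, e'.1⟩, e'.2⟩⟩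
  have hmem : ∀ x y, C x y ↔ x.1.1.1 ∈ insert y.1.1.1 y.1.1.2 := by
    intro x y
    rw [Finset.mem_insert, or_comm]
  have hcardB : ∀ y : {x : α × Finset α // x.2 ∈ 𝓑 x.1} × Fin m,
      (insert y.1.1.1 y.1.1.2).card = l + 1 := by
    intro y
    obtain ⟨h1, h2⟩ := hBl y.1.1.1 y.1.1.2 y.1.2
    rw [Finset.card_insert_of_notMem h1, h2]
  have hpaths : ∀ x y, Nat.card {z // C x z ∧ C z y} =
      m * (((insert y.1.1.1 y.1.1.2).erase x.1.1.1).card * d + if C x y then s else 0) := by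
    intro x y
    simp only [hmem _ y]
    exact card_block_pairs_through m 𝓑 hBs hBreg _ _
  rw [hAdj]
  refine IsDSRG.of_reflexive C (fun x => Or.inr rfl) ?_ (fun x => ?_) (fun x => ?_)
    (fun x y h => ?_) (fun x y h => ?_)
  · rw [← hcard, ← Finset.card_univ, ← hS]
    exact Nat.card_congr (Equiv.subtypeUnivEquiv fun _ => Finset.mem_univ _).symm
  · have := card_block_pairs_through m 𝓑 hBs hBreg Finset.univ x.1.1.1
    simpa [C, Finset.card_erase_of_mem, hcard, mul_comm _ d, hdn] using this
  · simp only [hmem _ x]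
    rw [hS, hcardB, add_one_mul]
  · rw [hpaths, if_pos h, Finset.card_erase_of_mem ((hmem x y).1 h), hcardB, Nat.add_sub_cancel]
  · rw [hpaths, if_neg h, Finset.erase_eq_of_notMem (mt (hmem x y).2 h), hcardB, add_zero]
end

section
/- Construction II with d = 1, m-fold multiple of the first graph. For a positive integer m, let D be the directed graph on the vertex set V × {1, …, m}, where V = {(i, B) : i ∈ P, B ∈ 𝓑_i}, with adjacency ((i, B), c) → ((j, B′), c′) if and only if i ∈ B′. Then D is a directed strongly regular graph with parameters (v, k, t, λ, μ) = (m(ls² + s), mls, ml, m(l−1), ml). -/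
/-- There are `|S| s m` vertices `((j, B), c)` whose point `j` lies in `S`. -/
lemma card_vertices_point_mem {α : Type} (s m : ℕ)
    (𝓑 : α → Finset (Finset α)) (hBs : ∀ i : α, (𝓑 i).card = s) (S : Finset α) :
    Nat.card {z : {x : α × Finset α // x.2 ∈ 𝓑 x.1} × Fin m // z.1.1.1 ∈ S} =
      S.card * s * m := by
  let e : {z : {x : α × Finset α // x.2 ∈ 𝓑 x.1} × Fin m // z.1.1.1 ∈ S} ≃
      (Σ i : S, 𝓑 i) × Fin m :=
    { toFun := fun z => (⟨⟨z.1.1.1.1, z.2⟩, ⟨z.1.1.1.2, z.1.1.2⟩⟩, z.1.2)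
      invFun := fun w => ⟨(⟨(w.1.1, w.1.2), w.1.2.2⟩, w.2), w.1.1.2⟩
      left_inv := fun _ => rfl
      right_inv := fun _ => rfl }
  rw [Nat.card_congr e, Nat.card_prod, Nat.card_sigma]
  simp [hBs]

/-- There are `|S \ {i}| m` vertices `((j, B), c)` with `i ∈ B` and `j ∈ S`: the block `B` is
determined by `j ≠ i`. -/
lemma card_vertices_mem_block_point_mem {α : Type} [DecidableEq α] (m : ℕ)
    (𝓑 : α → Finset (Finset α)) (hB : ∀ i : α, ∀ B ∈ 𝓑 i, i ∉ B)
    (hBpart : ∀ i x : α, x ≠ i → ∃! B, B ∈ 𝓑 i ∧ x ∈ B) (i : α) (S : Finset α) :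
    Nat.card {z : {x : α × Finset α // x.2 ∈ 𝓑 x.1} × Fin m //
      i ∈ z.1.1.2 ∧ z.1.1.1 ∈ S} = (S.erase i).card * m := by
  let f : {z : {x : α × Finset α // x.2 ∈ 𝓑 x.1} × Fin m // i ∈ z.1.1.2 ∧ z.1.1.1 ∈ S} →
      ↥(S.erase i) × Fin m := fun z =>
    (⟨z.1.1.1.1, Finset.mem_erase.2
      ⟨fun h => hB _ _ z.1.1.2 (h.symm.subst (motive := (· ∈ z.1.1.1.2)) z.2.1), z.2.2⟩⟩, z.1.2)
  have hf : Function.Bijective f := by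
    constructor
    · rintro ⟨⟨⟨⟨j, B⟩, hjB⟩, c⟩, hi, hj⟩ ⟨⟨⟨⟨j', B'⟩, hjB'⟩, c'⟩, hi', hj'⟩ h
      simp only [f, Prod.mk.injEq, Subtype.mk.injEq] at h
      obtain ⟨rfl, rfl⟩ := h
      have hij : i ≠ j := fun h => hB _ _ hjB (h ▸ hi)
      obtain rfl : B = B' := (hBpart j i hij).unique ⟨hjB, hi⟩ ⟨hjB', hi'⟩
      rfl
    · rintro ⟨⟨j, hj⟩, c⟩
      obtain ⟨hji, hjS⟩ := Finset.mem_erase.1 hj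
      obtain ⟨B, hjB, hi⟩ := (hBpart j i hji.symm).exists
      exact ⟨⟨⟨⟨⟨j, B⟩, hjB⟩, c⟩, hi, hjS⟩, rfl⟩
  rw [Nat.card_eq_of_bijective f hf, Nat.card_prod, Nat.card_eq_fintype_card, Fintype.card_coe,
    Nat.card_fin]

/-- **Construction II with `d = 1`, `m`-fold multiple of the first graph.**  Let
`l, s` be positive integers, `P` the finite type `α` with `ls + 1` elements, and
for each `i ∈ P` let `𝓑 i` be a partition of `P \ {i}` into `s` blocks of size
`l`.  The vertices are the pairs `((i, B), c)` with `B ∈ 𝓑 i`, `c ∈ {1, …, m}`,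
and `((i,B),c) → ((j,B'),c')` iff `i ∈ B'`.  This directed graph is a DSRG with
parameters `(m(ls² + s), mls, ml, m(l−1), ml)`. -/
theorem constructionII_d_eq_one_D1_multiple_dsrg
    {α : Type} [Fintype α] [DecidableEq α]
    (l s m : ℕ) (hl : 0 < l) (hs : 0 < s) (hm : 0 < m)
    (hcard : Fintype.card α = l * s + 1)
    (𝓑 : α → Finset (Finset α))
    (hBs : ∀ i : α, (𝓑 i).card = s)
    (hBl : ∀ i : α, ∀ B ∈ 𝓑 i, i ∉ B ∧ B.card = l)
    (hBpart : ∀ i x : α, x ≠ i → ∃! B, B ∈ 𝓑 i ∧ x ∈ B) :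
    IsDSRG (V := {x : α × Finset α // x.2 ∈ 𝓑 x.1} × Fin m)
      (fun x y => x.1.1.1 ∈ y.1.1.2)
      (m * (l * s ^ 2 + s)) (m * (l * s)) (m * l) (m * (l - 1)) (m * l) := by
  have hB : ∀ i : α, ∀ B ∈ 𝓑 i, i ∉ B := fun i B h => (hBl i B h).1
  have hin := card_vertices_point_mem s m 𝓑 hBs
  have hpath := card_vertices_mem_block_point_mem m 𝓑 hB hBpart
  refine ⟨inferInstance, fun x => hB _ _ x.1.2, ?_, fun x => ?_, fun x => ?_, fun x => ?_,
    fun x y _ hxy => ?_, fun x y _ hxy => ?_⟩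
  · have h := hin Finset.univ
    simp only [Finset.mem_univ, Nat.card_congr (Equiv.subtypeUnivEquiv fun _ => trivial),
      Finset.card_univ, hcard] at h
    rw [h]
    ring
  · have h := hpath x.1.1.1 Finset.univ
    simp only [Finset.mem_univ, and_true, Finset.card_erase_of_mem, Finset.card_univ, hcard,
      Nat.add_sub_cancel] at h
    rw [h, mul_comm]
  · rw [hin x.1.1.2, (hBl _ _ x.1.2).2, mul_comm]
  · rw [hpath x.1.1.1 x.1.1.2, Finset.erase_eq_of_notMem (hB _ _ x.1.2), (hBl _ _ x.1.2).2,
      mul_comm]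
  · rw [hpath x.1.1.1 y.1.1.2, Finset.card_erase_of_mem hxy, (hBl _ _ y.1.2).2, mul_comm]
  · rw [hpath x.1.1.1 y.1.1.2, Finset.erase_eq_of_notMem hxy, (hBl _ _ y.1.2).2, mul_comm]
end

section
/- Construction II with d = 1, m-fold multiple of the second graph. For a positive integer m, let D be the directed graph on the vertex set V × {1, …, m}, where V = {(i, B) : i ∈ P, B ∈ 𝓑_i}, with adjacency ((i, B), c) → ((j, B′), c′) if and only if either i ∈ B′, or i = j and (B, c) ≠ (B′, c′). Then D is a directed strongly regular graph with parameters (v, k, t, λ, μ) = (m(ls² + s), m(ls + s) − 1, m(l + s) − 1, m(l + s) − 2, m(l + 1)). -/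
/-- Flags `(h, C)` with `C ∈ 𝓑 h` and a color in `Fin m`, counted point by point. -/
lemma card_coloredFlags {α : Type} [DecidableEq α] (m : ℕ) (𝓑 : α → Finset (Finset α))
    (T : Finset α) (Q : α → Finset α → Prop) [∀ h, DecidablePred (Q h)] :
    Nat.card {z : {x : α × Finset α // x.2 ∈ 𝓑 x.1} × Fin m //
      z.1.1.1 ∈ T ∧ Q z.1.1.1 z.1.1.2} = m * ∑ h ∈ T, ((𝓑 h).filter (Q h)).card := by
  let e : {z : {x : α × Finset α // x.2 ∈ 𝓑 x.1} × Fin m //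
      z.1.1.1 ∈ T ∧ Q z.1.1.1 z.1.1.2} ≃
      Fin m × {y : Σ _ : α, Finset α // y ∈ T.sigma fun h => (𝓑 h).filter (Q h)} :=
    { toFun := fun z => (z.1.2, ⟨⟨z.1.1.1.1, z.1.1.1.2⟩, by
        simpa using ⟨z.2.1, z.1.1.2, z.2.2⟩⟩)
      invFun := fun y => ⟨(⟨(y.2.1.1, y.2.1.2),
        (Finset.mem_filter.1 (Finset.mem_sigma.1 y.2.2).2).1⟩, y.1),
        (Finset.mem_sigma.1 y.2.2).1, (Finset.mem_filter.1 (Finset.mem_sigma.1 y.2.2).2).2⟩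
      left_inv := fun _ => rfl
      right_inv := fun _ => rfl }
  rw [Nat.card_congr e, Nat.card_prod, Nat.card_eq_finsetCard, Finset.card_sigma, Nat.card_fin]

lemma card_blocks_mem_insert {α : Type} [DecidableEq α] {s : ℕ} {𝓑 : α → Finset (Finset α)}
    (hBs : ∀ i, (𝓑 i).card = s) (hBpart : ∀ i x : α, x ≠ i → ∃! B, B ∈ 𝓑 i ∧ x ∈ B)
    (i h : α) : ((𝓑 h).filter fun C => i ∈ insert h C).card = if h = i then s else 1 := by
  split_ifs with hi
  · subst hi
    simp [hBs]
  · obtain ⟨B, hB, huniq⟩ := hBpart h i (Ne.symm hi)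
    rw [Finset.card_eq_one]
    refine ⟨B, ?_⟩
    ext C
    simp only [Finset.mem_filter, Finset.mem_insert, Finset.mem_singleton, Ne.symm hi, false_or]
    exact ⟨huniq C, fun hC => hC ▸ hB⟩

lemma card_coloredFlags_mem_insert {α : Type} [DecidableEq α] {s : ℕ} (m : ℕ)
    {𝓑 : α → Finset (Finset α)}
    (hBs : ∀ i, (𝓑 i).card = s) (hBpart : ∀ i x : α, x ≠ i → ∃! B, B ∈ 𝓑 i ∧ x ∈ B)
    (T : Finset α) (i : α) :
    Nat.card {z : {x : α × Finset α // x.2 ∈ 𝓑 x.1} × Fin m //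
      z.1.1.1 ∈ T ∧ i ∈ insert z.1.1.1 z.1.1.2} =
      m * if i ∈ T then T.card - 1 + s else T.card := by
  rw [card_coloredFlags m 𝓑 T fun h C => i ∈ insert h C]
  simp only [card_blocks_mem_insert hBs hBpart]
  congr 1
  split_ifs with hi
  · rw [← Finset.sum_erase_add _ _ hi, ← Finset.card_erase_of_mem hi, if_pos rfl,
      Finset.card_eq_sum_ones]
    congr 1
    exact Finset.sum_congr rfl fun h hh => if_neg (Finset.ne_of_mem_erase hh)
  · rw [Finset.card_eq_sum_ones]
    exact Finset.sum_congr rfl fun h hh => if_neg (ne_of_mem_of_not_mem hh hi)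

lemma card_subtype_and_ne {V : Type} (p : V → Prop) {a : V} (ha : p a) :
    Nat.card {z // p z ∧ z ≠ a} = Nat.card {z // p z} - 1 :=
  Set.ncard_sdiff_singleton_of_mem (s := {z | p z}) ha

/-- **Construction II with `d = 1`, `m`-fold multiple of the second graph.**  Let
`l, s` be positive integers, `P` the finite type `α` with `ls + 1` elements, and
for each `i ∈ P` let `𝓑 i` be a partition of `P \ {i}` into `s` blocks of size
`l`.  The vertices are the pairs `((i, B), c)` with `B ∈ 𝓑 i`, `c ∈ {1, …, m}`,
and `((i,B),c) → ((j,B'),c')` iff `i ∈ B'`, or `i = j` and `(B, c) ≠ (B', c')`.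
This directed graph is a DSRG with parameters
`(m(ls² + s), m(ls + s) − 1, m(l + s) − 1, m(l + s) − 2, m(l + 1))`. -/
theorem constructionII_d_eq_one_D2_multiple_dsrg
    {α : Type} [Fintype α] [DecidableEq α]
    (l s m : ℕ) (hl : 0 < l) (hs : 0 < s) (hm : 0 < m)
    (hcard : Fintype.card α = l * s + 1)
    (𝓑 : α → Finset (Finset α))
    (hBs : ∀ i : α, (𝓑 i).card = s)
    (hBl : ∀ i : α, ∀ B ∈ 𝓑 i, i ∉ B ∧ B.card = l)
    (hBpart : ∀ i x : α, x ≠ i → ∃! B, B ∈ 𝓑 i ∧ x ∈ B) :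
    IsDSRG (V := {x : α × Finset α // x.2 ∈ 𝓑 x.1} × Fin m)
      (fun x y => x.1.1.1 ∈ y.1.1.2 ∨
        (x.1.1.1 = y.1.1.1 ∧ (x.1.1.2, x.2) ≠ (y.1.1.2, y.2)))
      (m * (l * s ^ 2 + s)) (m * (l * s + s) - 1) (m * (l + s) - 1) (m * (l + s) - 2)
      (m * (l + 1)) := by
  have hcardBlock : ∀ i, ∀ B ∈ 𝓑 i, (insert i B).card = l + 1 := fun i B hB => by
    rw [Finset.card_insert_of_notMem (hBl i B hB).1, (hBl i B hB).2]
  have hcount := card_coloredFlags_mem_insert m hBs hBpart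
  have hall : ∀ T : Finset α, Nat.card {z : {x : α × Finset α // x.2 ∈ 𝓑 x.1} × Fin m //
      z.1.1.1 ∈ T} = m * (T.card * s) := fun T => by
    simpa [hBs] using card_coloredFlags m 𝓑 T fun _ _ => True
  -- Adjacency is the irreflexive part of the relation `i ∈ insert j B'`.
  have hadj : (fun x y : {x : α × Finset α // x.2 ∈ 𝓑 x.1} × Fin m =>
      x.1.1.1 ∈ y.1.1.2 ∨ (x.1.1.1 = y.1.1.1 ∧ (x.1.1.2, x.2) ≠ (y.1.1.2, y.2))) =
      fun x y => x.1.1.1 ∈ insert y.1.1.1 y.1.1.2 ∧ x ≠ y := by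
    funext x y
    obtain ⟨⟨⟨i, B⟩, hB⟩, c⟩ := x
    obtain ⟨⟨⟨j, B'⟩, hB'⟩, c'⟩ := y
    have := (hBl j B' hB').1
    simp only [Finset.mem_insert, ne_eq, Prod.mk.injEq, Subtype.mk.injEq, eq_iff_iff]
    grind
  rw [hadj]
  refine ⟨inferInstance, fun x h => h.2 rfl, ?_, fun x => ?_, fun x => ?_, fun x => ?_,
    fun x y hxy h => ?_, fun x y hxy h => ?_⟩
  · have := hall Finset.univ
    simp only [Finset.mem_univ, Finset.card_univ, hcard] at this
    rw [← Nat.card_congr (Equiv.subtypeUnivEquiv fun _ => trivial), this]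
    ring
  · have := hcount Finset.univ x.1.1.1
    simp only [Finset.mem_univ, true_and, if_true, Finset.card_univ, hcard,
      Nat.add_sub_cancel] at this
    rw [← this, ← card_subtype_and_ne
      (fun y : {x : α × Finset α // x.2 ∈ 𝓑 x.1} × Fin m => x.1.1.1 ∈ insert y.1.1.1 y.1.1.2)
      (Finset.mem_insert_self x.1.1.1 x.1.1.2)]
    exact Nat.card_congr (Equiv.subtypeEquivRight fun y => and_congr_right' ne_comm)
  · rw [card_subtype_and_ne
      (fun y : {x : α × Finset α // x.2 ∈ 𝓑 x.1} × Fin m => y.1.1.1 ∈ insert x.1.1.1 x.1.1.2)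
      (Finset.mem_insert_self _ _), hall, hcardBlock _ _ x.1.2]
    congr 1
    ring
  · have := hcount (insert x.1.1.1 x.1.1.2) x.1.1.1
    rw [if_pos (Finset.mem_insert_self _ _), hcardBlock _ _ x.1.2, Nat.add_sub_cancel] at this
    rw [← this, ← card_subtype_and_ne _
      ⟨Finset.mem_insert_self x.1.1.1 x.1.1.2, Finset.mem_insert_self x.1.1.1 x.1.1.2⟩]
    exact Nat.card_congr (Equiv.subtypeEquivRight fun y => by grind)
  · have := hcount (insert y.1.1.1 y.1.1.2) x.1.1.1
    rw [if_pos h.1, hcardBlock _ _ y.1.2, Nat.add_sub_cancel] at this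
    rw [← this, ← Nat.sub_sub _ 1 1, ← card_subtype_and_ne _
      ⟨h.1, Finset.mem_insert_self x.1.1.1 x.1.1.2⟩, ← card_subtype_and_ne _
      ⟨⟨Finset.mem_insert_self y.1.1.1 y.1.1.2, h.1⟩, hxy.symm⟩]
    exact Nat.card_congr (Equiv.subtypeEquivRight fun z => by grind)
  · have hx : x.1.1.1 ∉ insert y.1.1.1 y.1.1.2 := fun hx => h ⟨hx, hxy⟩
    have := hcount (insert y.1.1.1 y.1.1.2) x.1.1.1
    rw [if_neg hx, hcardBlock _ _ y.1.2] at this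
    rw [← this]
    exact Nat.card_congr (Equiv.subtypeEquivRight fun z => by grind)
end

section
/- For all positive integers r, a, b with r ≥ 2, there exists a directed strongly regular graph with parameters (v, k, t, λ, μ) = (r(1+ab)²b, r(1+ab)ab, ra²b + a, ra²b + a − ab − 1, ra²b + a). -/
namespace DSRGFamily

open Finset

variable {I G F : Type} [DecidableEq I] [DecidableEq F] [AddCommGroup G]

/-- The adjacency relation on `I × G × G × F` induced by a partial labelling `φ` of `G`. The vertex
`(i, g, e, f)` stands for the point `(i, g)` together with a block that meets the class `i` in
`g + φ⁻¹(f)` and every other class in `e + φ⁻¹(f)`; `x → y` when the point of `x` lies in the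
block of `y`. -/
abbrev Adj (φ : G → Option F) (x y : I × G × G × F) : Prop :=
  φ (x.2.1 - if x.1 = y.1 then y.2.1 else y.2.2.1) = some y.2.2.2

lemma natCard_subtype_eq_sum {α : Type} [Fintype α] (P : α → Prop) [DecidablePred P] :
    Nat.card {x // P x} = ∑ x, if P x then 1 else 0 := by
  rw [Nat.card_eq_fintype_card, Fintype.card_subtype, Finset.card_filter]

lemma sum_label_eq [DecidableEq G] [Fintype F] {φ : G → Option F}
    (h0 : ∀ g, φ g = none ↔ g = 0) (d : G) :
    (∑ f, if φ d = some f then 1 else 0) = if d = 0 then 0 else 1 := by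
  by_cases hd : d = 0
  · rw [(h0 d).2 hd]
    simp [hd]
  · obtain ⟨f, hf⟩ := Option.ne_none_iff_exists'.1 (mt (h0 d).1 hd)
    simp [hf, hd]

variable [Fintype G]

lemma sum_sub_label_eq {φ : G → Option F} {a : ℕ}
    (hφ : ∀ f, (∑ g, if φ g = some f then 1 else 0) = a) (c : G) (f : F) :
    (∑ g, if φ (g - c) = some f then 1 else 0) = a := by
  rw [← hφ f]
  exact Fintype.sum_equiv (Equiv.subRight c) _ _ fun _ => rfl

lemma inDegree [Fintype I] [Fintype F] {φ : G → Option F} {a : ℕ}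
    (hφ : ∀ f, (∑ g, if φ g = some f then 1 else 0) = a) (y : I × G × G × F) :
    Nat.card {x // Adj φ x y} =
      Fintype.card I * (a * (Fintype.card G * Fintype.card F)) := by
  rw [natCard_subtype_eq_sum]
  simp only [Fintype.sum_prod_type]
  change (∑ i, ∑ g, ∑ _e : G, ∑ _f : F,
    if φ (g - if i = y.1 then y.2.1 else y.2.2.1) = some y.2.2.2 then 1 else 0) = _
  simp only [Finset.sum_const, Finset.card_univ, smul_eq_mul, ← Finset.mul_sum,
    sum_sub_label_eq hφ]
  ring

variable [DecidableEq G]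

lemma sum_sub_ne_zero (g : G) :
    (∑ e, if g - e = 0 then 0 else 1) = Fintype.card G - 1 := by
  simp only [sub_eq_zero]
  rw [← Finset.card_univ, ← Finset.card_erase_of_mem (mem_univ g), Finset.card_eq_sum_ones,
    ← Finset.filter_ne, Finset.sum_filter]
  exact Finset.sum_congr rfl fun e _ => by by_cases h : g = e <;> simp [h]

/-- The number of vertices over a given point `(j, g')` whose block contains `(i, g)`. -/
lemma sum_block_mem [Fintype F] {φ : G → Option F} (h0 : ∀ g, φ g = none ↔ g = 0)
    (i j : I) (g g' : G) :
    (∑ e, ∑ f, if φ (g - if i = j then g' else e) = some f then 1 else 0) =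
      if i = j then (if g = g' then 0 else Fintype.card G) else Fintype.card G - 1 := by
  simp only [sum_label_eq h0]
  by_cases hij : i = j
  · by_cases hg : g = g' <;> simp [hij, hg, sub_eq_zero]
  · simp only [hij, if_false]
    exact sum_sub_ne_zero g

lemma outDegree [Fintype I] [Fintype F] {φ : G → Option F} (h0 : ∀ g, φ g = none ↔ g = 0)
    (x : I × G × G × F) :
    Nat.card {y // Adj φ x y} = Fintype.card I * (Fintype.card G * (Fintype.card G - 1)) := by
  rw [natCard_subtype_eq_sum]
  simp only [Fintype.sum_prod_type, Adj, sum_block_mem h0]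
  rw [Finset.sum_eq_card_nsmul (b := Fintype.card G * (Fintype.card G - 1))]
  · simp
  intro j _
  by_cases hij : x.1 = j
  · have := sum_sub_ne_zero x.2.1
    simp only [sub_eq_zero] at this
    rw [← this, Finset.mul_sum]
    simp [hij]
  · simp [hij]

/-- There are `card G` fewer walks of length two from `x` to `y` when `x → y` than otherwise. -/
lemma card_twoPaths_add [Fintype I] [Fintype F] {φ : G → Option F} (h0 : ∀ g, φ g = none ↔ g = 0)
    {a : ℕ} (hφ : ∀ f, (∑ g, if φ g = some f then 1 else 0) = a) (x y : I × G × G × F) :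
    Nat.card {z // Adj φ x z ∧ Adj φ z y} + (if Adj φ x y then Fintype.card G else 0) =
      Fintype.card G * a + (Fintype.card I - 1) * ((Fintype.card G - 1) * a) := by
  have hsum : Nat.card {z // Adj φ x z ∧ Adj φ z y} = ∑ i, ∑ g,
      (if x.1 = i then (if x.2.1 = g then 0 else Fintype.card G) else Fintype.card G - 1) *
        (if φ (g - if i = y.1 then y.2.1 else y.2.2.1) = some y.2.2.2 then 1 else 0) := by
    rw [natCard_subtype_eq_sum]
    simp only [Fintype.sum_prod_type, Adj, ← sum_block_mem h0, Finset.sum_mul]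
    refine Finset.sum_congr rfl fun i _ => Finset.sum_congr rfl fun g _ =>
      Finset.sum_congr rfl fun e _ => Finset.sum_congr rfl fun f _ => ?_
    rw [ite_and, ite_mul, one_mul, zero_mul]
  rw [hsum, ← Finset.add_sum_erase _ _ (mem_univ x.1)]
  have hother : ∀ i ∈ univ.erase x.1, (∑ g,
      (if x.1 = i then (if x.2.1 = g then 0 else Fintype.card G) else Fintype.card G - 1) *
        (if φ (g - if i = y.1 then y.2.1 else y.2.2.1) = some y.2.2.2 then 1 else 0)) =
      (Fintype.card G - 1) * a := by
    intro i hi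
    simp only [(Finset.ne_of_mem_erase hi).symm, if_false]
    rw [← Finset.mul_sum, sum_sub_label_eq hφ]
  have hsame : (∑ g,
      (if x.1 = x.1 then (if x.2.1 = g then 0 else Fintype.card G) else Fintype.card G - 1) *
        (if φ (g - if x.1 = y.1 then y.2.1 else y.2.2.1) = some y.2.2.2 then 1 else 0)) +
      (if Adj φ x y then Fintype.card G else 0) = Fintype.card G * a := by
    rw [← sum_sub_label_eq hφ (if x.1 = y.1 then y.2.1 else y.2.2.1) y.2.2.2, Finset.mul_sum,
      ← Finset.add_sum_erase _ _ (mem_univ x.2.1), ← Finset.add_sum_erase _ _ (mem_univ x.2.1),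
      add_right_comm]
    congr 1
    · simp [Adj]
    · refine Finset.sum_congr rfl fun g hg => ?_
      simp [(Finset.ne_of_mem_erase hg).symm]
  rw [Finset.sum_congr rfl hother, add_right_comm, hsame]
  simp

lemma exists_labelling (a b : ℕ) : ∃ φ : ZMod (a * b + 1) → Option (Fin b),
    (∀ g, φ g = none ↔ g = 0) ∧ ∀ f, (∑ g, if φ g = some f then 1 else 0) = a := by
  have hcard : Fintype.card (ZMod (a * b + 1)) = Fintype.card (Option (Fin b × Fin a)) := by
    simp [mul_comm]
  let e := (Fintype.equivOfCardEq hcard).setValue 0 none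
  have he : e 0 = none := Equiv.setValue_eq _ _ _
  refine ⟨fun g => (e g).map Prod.fst, fun g => ?_, fun f => ?_⟩
  · rw [Option.map_eq_none_iff, ← he, e.apply_eq_iff_eq]
  · rw [Fintype.sum_equiv e _ (fun o => if o.map Prod.fst = some f then 1 else 0) fun _ => rfl]
    rw [Fintype.sum_option, Fintype.sum_prod_type]
    simp

end DSRGFamily

/-- For all positive integers `r, a, b` with `r ≥ 2`, there exists a directed
strongly regular graph with parameters
`(r(1+ab)²b, r(1+ab)ab, ra²b + a, ra²b + a − ab − 1, ra²b + a)`. -/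
theorem exists_dsrg_family_one
    (r a b : ℕ) (ha : 0 < a) (hb : 0 < b) (hr : 2 ≤ r) :
    ∃ (V : Type) (Adj : V → V → Prop),
      IsDSRG Adj
        (r * (1 + a * b) ^ 2 * b)
        (r * (1 + a * b) * a * b)
        (r * a ^ 2 * b + a)
        (r * a ^ 2 * b + a - a * b - 1)
        (r * a ^ 2 * b + a) := by
  obtain ⟨φ, h0, hφ⟩ := DSRGFamily.exists_labelling a b
  have hloop : ∀ x : Fin r × ZMod (a * b + 1) × ZMod (a * b + 1) × Fin b,
      ¬ DSRGFamily.Adj φ x x := fun x => by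
    simp [DSRGFamily.Adj, (h0 0).2 rfl]
  have hmu : (a * b + 1) * a + (r - 1) * ((a * b + 1 - 1) * a) = r * a ^ 2 * b + a := by
    obtain ⟨s, rfl⟩ : ∃ s, r = s + 1 := ⟨r - 1, by omega⟩
    simp only [Nat.add_sub_cancel]
    ring
  have hpaths := DSRGFamily.card_twoPaths_add (I := Fin r) h0 hφ
  simp only [ZMod.card, Fintype.card_fin, hmu] at hpaths
  refine ⟨Fin r × ZMod (a * b + 1) × ZMod (a * b + 1) × Fin b, DSRGFamily.Adj φ,
    inferInstance, hloop, ?_, fun x => ?_, fun x => ?_, fun x => ?_, fun x y _ hxy => ?_,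
    fun x y _ hxy => ?_⟩
  · simp only [Nat.card_eq_fintype_card, Fintype.card_prod, ZMod.card, Fintype.card_fin]
    ring
  · rw [DSRGFamily.outDegree h0]
    simp only [ZMod.card, Fintype.card_fin, Nat.add_sub_cancel]
    ring
  · rw [DSRGFamily.inDegree hφ]
    simp only [ZMod.card, Fintype.card_fin]
    ring
  · simpa [hloop x] using hpaths x x
  · have := hpaths x y
    rw [if_pos hxy] at this
    omega
  · simpa [hxy] using hpaths x y
end

section
/- For all positive integers d, l, s such that d divides ls and 1 ≤ l < ls/d, there exists a directed strongly regular graph with parameters (v, k, t, λ, μ) = ((1 + ls/d)s, ls, ld, ld − d, ld). -/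
/-- If `l ≤ m` and `s * l = d * m`, there are `s` blocks of size `l` on `m` points such that
every point lies in exactly `d` blocks. -/
theorem exists_oneDesign {d l m s : ℕ} (hlm : l ≤ m) (h : s * l = d * m) :
    ∃ S : Fin s → Finset (Fin m), (∀ b, (S b).card = l) ∧
      ∀ g, (Finset.univ.filter fun b => g ∈ S b).card = d := by
  classical
  let e : Fin s × Fin l ≃ Fin d × Fin m :=
    finProdFinEquiv.trans ((finCongr h).trans finProdFinEquiv.symm)
  have hval : ∀ b i, ((e (b, i)).2 : ℕ) = (i + l * b) % m := fun b i => rfl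
  have hinj : ∀ b, Function.Injective fun i => (e (b, i)).2 := by
    intro b i j hij
    have hij' : (i + l * b : ℕ) % m = (j + l * b) % m := by
      rw [← hval, ← hval]
      exact congrArg Fin.val hij
    have hmod : (i : ℕ) ≡ j [MOD m] := Nat.ModEq.add_right_cancel' _ hij'
    exact Fin.ext (hmod.eq_of_lt_of_lt (by omega) (by omega))
  refine ⟨fun b => Finset.univ.image fun i => (e (b, i)).2, fun b => ?_, fun g => ?_⟩
  · rw [Finset.card_image_of_injective _ (hinj b), Finset.card_fin]
  · refine Eq.trans (Eq.symm ?_) (Finset.card_fin d)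
    refine Finset.card_bij (fun c _ => (e.symm (c, g)).1) ?_ ?_ ?_
    · intro c _
      simp only [Finset.mem_filter, Finset.mem_univ, true_and, Finset.mem_image]
      exact ⟨(e.symm (c, g)).2, by simp⟩
    · intro c _ c' _ hcc
      have h2 : (e.symm (c, g)).2 = (e.symm (c', g)).2 := by
        apply hinj (e.symm (c, g)).1
        change (e ((e.symm (c, g)).1, (e.symm (c, g)).2)).2 =
          (e ((e.symm (c, g)).1, (e.symm (c', g)).2)).2
        conv_rhs => rw [hcc]
        simp
      exact congrArg Prod.fst (e.symm.injective (Prod.ext hcc h2))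
    · intro b hb
      simp only [Finset.mem_filter, Finset.mem_univ, true_and, Finset.mem_image] at hb
      obtain ⟨i, rfl⟩ := hb
      exact ⟨(e (b, i)).1, Finset.mem_univ _, by simp⟩

/-- If every point `x ≠ z` lies in exactly `d` of the blocks `B z c`, and `z` lies in none of
them, then `x` lies in `d * |T \ {x}|` of the blocks `B z c` with `z ∈ T`. -/
theorem card_antiflags {P ι : Type} [Fintype P] [Fintype ι] [DecidableEq P]
    {B : P → ι → Finset P} {d : ℕ} (hB : ∀ y b, y ∉ B y b)
    (hd : ∀ x z, x ≠ z → (Finset.univ.filter fun c => x ∈ B z c).card = d)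
    (x : P) (T : Finset P) :
    Nat.card {z : P × ι // x ∈ B z.1 z.2 ∧ z.1 ∈ T} = (T.erase x).card * d := by
  rw [Nat.card_eq_fintype_card, Fintype.card_subtype,
    Finset.card_eq_sum_card_fiberwise (f := Prod.fst) (t := T.erase x)]
  · refine Finset.sum_const_nat fun z hz => ?_
    obtain ⟨hzx, hzT⟩ := Finset.mem_erase.mp hz
    rw [← hd x z hzx.symm]
    refine Finset.card_bij (fun p _ => p.2) ?_ ?_ ?_
    · rintro ⟨y, c⟩ hp
      simp only [Finset.mem_filter, Finset.mem_univ, true_and] at hp ⊢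
      exact hp.2 ▸ hp.1.1
    · rintro ⟨y, c⟩ hp ⟨y', c'⟩ hp' hcc
      simp only [Finset.mem_filter] at hp hp'
      exact Prod.ext (hp.2.trans hp'.2.symm) hcc
    · intro c hc
      simp only [Finset.mem_filter, Finset.mem_univ, true_and] at hc
      exact ⟨(z, c), by simp [hc, hzT], rfl⟩
  · rintro ⟨y, c⟩ hp
    simp only [Finset.coe_filter, Finset.mem_univ, true_and, Set.mem_ofPred_eq] at hp
    refine Finset.mem_coe.mpr (Finset.mem_erase.mpr ⟨?_, hp.2⟩)
    rintro rfl
    exact hB _ _ hp.1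

/-- The graph on pairs `(y, b)` where `(x, a) → (y, b)` means that `x` lies in the block
`B y b` is directed strongly regular. -/
theorem isDSRG_antiflags {P ι : Type} [Fintype P] [Fintype ι] [DecidableEq P]
    {B : P → ι → Finset P} {d l : ℕ} (hB : ∀ y b, y ∉ B y b) (hl : ∀ y b, (B y b).card = l)
    (hd : ∀ x z, x ≠ z → (Finset.univ.filter fun c => x ∈ B z c).card = d)
    (hk : (Fintype.card P - 1) * d = l * Fintype.card ι) :
    IsDSRG (fun p q : P × ι => p.1 ∈ B q.1 q.2) (Fintype.card P * Fintype.card ι)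
      (l * Fintype.card ι) (l * d) (l * d - d) (l * d) := by
  refine ⟨inferInstance, fun x => hB _ _, by simp, fun x => ?_, fun x => ?_, fun x => ?_,
    fun x y _ hxy => ?_, fun x y _ hxy => ?_⟩
  · have h := card_antiflags hB hd x.1 Finset.univ
    simp only [Finset.mem_univ, and_true] at h
    rw [h, Finset.card_erase_of_mem (Finset.mem_univ _), Finset.card_univ, hk]
  · rw [Nat.card_eq_fintype_card, Fintype.card_subtype, ← hl x.1 x.2, ← Finset.card_univ,
      ← Finset.card_product]
    congr 1
    ext p
    simp
  · rw [card_antiflags hB hd x.1 (B x.1 x.2), Finset.erase_eq_of_notMem (hB _ _), hl]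
  · rw [card_antiflags hB hd x.1 (B y.1 y.2), Finset.card_erase_of_mem hxy, hl, Nat.sub_mul,
      one_mul]
  · rw [card_antiflags hB hd x.1 (B y.1 y.2), Finset.erase_eq_of_notMem hxy, hl]

/-- For all positive integers `d, l, s` such that `d` divides `ls` and
`1 ≤ l < ls/d`, there exists a directed strongly regular graph with parameters
`((1 + ls/d)s, ls, ld, ld − d, ld)`. -/
theorem exists_dsrg_family_two
    (d l s : ℕ) (hd : 0 < d) (hl : 0 < l) (hs : 0 < s)
    (hdvd : d ∣ l * s) (hlt : l < l * s / d) :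
    ∃ (V : Type) (Adj : V → V → Prop),
      IsDSRG Adj
        ((1 + l * s / d) * s) (l * s) (l * d) (l * d - d) (l * d) := by
  obtain ⟨m, hm⟩ := hdvd
  rw [hm, Nat.mul_div_cancel_left _ hd] at hlt
  obtain ⟨S, hS, hSd⟩ := exists_oneDesign (d := d) (s := s) hlt.le (by rw [mul_comm, hm])
  have key := isDSRG_antiflags (B := fun (y : Fin (m + 1)) b => (S b).map y.succAboveEmb)
    (d := d) (l := l) (fun y b => by simp) (fun y b => by simp [hS]) (fun x z hxz => ?_)
    (by simp [hm, mul_comm])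
  · rw [Fintype.card_fin, Fintype.card_fin] at key
    rw [show l * s / d = m by rw [hm, Nat.mul_div_cancel_left _ hd], add_comm 1 m]
    exact ⟨_, _, key⟩
  · obtain ⟨g, rfl⟩ := Fin.exists_succAbove_eq hxz
    simpa using hSd g
end

section
/- For all positive integers d, l, s such that d divides ls and 1 ≤ l < ls/d, there exists a directed strongly regular graph with parameters (v, k, t, λ, μ) = ((1 + ls/d)s, ls + s − 1, ld + s − 1, ld + s − 2, (l+1)d). -/
/-- If `s * l = d * m` and `l ≤ m`, then the `s` consecutive windows of length `l` modulo `m`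
cover each of the `m` residues exactly `d` times. -/
theorem exists_tactical_configuration {d l s m : ℕ} (hm : s * l = d * m) (hlm : l ≤ m) :
    ∃ R : Fin s → Fin m → Prop,
      (∀ a, Nat.card {c // R a c} = l) ∧ (∀ c, Nat.card {a // R a c} = d) := by
  let e : Fin s × Fin l ≃ Fin d × Fin m :=
    finProdFinEquiv.trans ((finCongr hm).trans finProdFinEquiv.symm)
  have he : ∀ a r, ((e (a, r)).2 : ℕ) = (r + l * a) % m := fun a r => rfl
  have hinj : ∀ a r r', (e (a, r)).2 = (e (a, r')).2 → r = r' := by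
    intro a r r' h
    have h' : (r + l * a : ℕ) ≡ r' + l * a [MOD m] := by
      have := congrArg Fin.val h
      rwa [he, he] at this
    have h'' := Nat.ModEq.add_right_cancel' _ h'
    exact Fin.ext (h''.eq_of_lt_of_lt (by omega) (by omega))
  refine ⟨fun a c => ∃ r, (e (a, r)).2 = c, fun a => ?_, fun c => ?_⟩
  · exact (Nat.card_congr (Equiv.ofInjective (fun r => (e (a, r)).2) (hinj a))).symm.trans
      (Nat.card_fin l)
  · let f : Fin d → {a // ∃ r, (e (a, r)).2 = c} := fun q =>
      ⟨(e.symm (q, c)).1, (e.symm (q, c)).2, by simp⟩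
    have hf : Function.Bijective f := by
      constructor
      · intro q q' h
        have h1 : (e.symm (q, c)).1 = (e.symm (q', c)).1 := congrArg Subtype.val h
        have h2 : (e.symm (q, c)).2 = (e.symm (q', c)).2 := by
          apply hinj (e.symm (q, c)).1
          conv_rhs => rw [h1]
          simp
        have h3 := e.symm.injective (Prod.ext h1 h2)
        exact congrArg Prod.fst h3
      · rintro ⟨a, r, h⟩
        refine ⟨(e (a, r)).1, Subtype.ext ?_⟩
        simp [f, ← h]
    rw [← Nat.card_congr (Equiv.ofBijective f hf)]
    simp

/-- Adding a distinguished point `0` to every block of a tactical configuration. -/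
theorem exists_pointed_tactical_configuration {d l s m : ℕ} (hm : s * l = d * m) (hlm : l ≤ m) :
    ∃ T : Fin s → Fin (m + 1) → Prop,
      (∀ a, T a 0) ∧ (∀ a, Nat.card {c // T a c} = l + 1) ∧
      (∀ c, c ≠ 0 → Nat.card {a // T a c} = d) := by
  classical
  obtain ⟨R, hR, hR'⟩ := exists_tactical_configuration hm hlm
  refine ⟨fun a c => Fin.cases (motive := fun _ => Prop) True (R a) c, fun a => trivial,
    fun a => ?_, fun c hc => ?_⟩
  · have h := hR a
    rw [Nat.card_eq_fintype_card, Fintype.card_subtype] at h ⊢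
    rw [Fin.card_filter_univ_succ, if_pos (by exact trivial), ← h]
    rfl
  · obtain ⟨c, rfl⟩ := Fin.exists_succ_eq.2 hc
    exact hR' c

section BlockDigraph

variable {G : Type} [AddCommGroup G] {d l s : ℕ} {T : Fin s → G → Prop}

open Finset

open scoped Classical in
theorem card_outBlocks [Fintype G] (hrow : ∀ a, Nat.card {c // T a c} = l + 1) (i : G)
    (a : Fin s) : #{k : G | T a (k - i)} = l + 1 := by
  rw [← hrow a, Nat.card_eq_fintype_card, Fintype.card_subtype]
  exact card_equiv (Equiv.subRight i) (by simp)

open scoped Classical in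
theorem card_blocks_through (hzero : ∀ a, T a 0)
    (hcol : ∀ c, c ≠ 0 → Nat.card {a // T a c} = d) (hds : d ≤ s) (c : G) :
    #{a | T a c} = d + if c = 0 then s - d else 0 := by
  split_ifs with h
  · subst h
    simp [hzero, hds]
  · rw [← hcol c h, Nat.card_eq_fintype_card, Fintype.card_subtype, add_zero]

open scoped Classical in
/-- The number of two-step walks in the reflexive block digraph. -/
theorem card_blockWalks [Fintype G] (hzero : ∀ a, T a 0)
    (hrow : ∀ a, Nat.card {c // T a c} = l + 1)
    (hcol : ∀ c, c ≠ 0 → Nat.card {a // T a c} = d) (hds : d ≤ s) (i j : G) (a : Fin s) :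
    #{z : G × Fin s | T a (z.1 - i) ∧ T z.2 (j - z.1)} =
      (l + 1) * d + if T a (j - i) then s - d else 0 := by
  have hfiber : ∀ k : G, (∑ c : Fin s, if T a (k - i) ∧ T c (j - k) then 1 else 0) =
      if T a (k - i) then d + (if j = k then s - d else 0) else 0 := by
    intro k
    split_ifs with h h' <;> simp [card_blocks_through hzero hcol hds, sub_eq_zero, *]
  rw [card_filter, Fintype.sum_prod_type]
  simp_rw [hfiber]
  rw [← sum_filter, sum_add_distrib, sum_const, card_outBlocks hrow, sum_ite_eq]
  simp

open scoped Classical in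
/-- The digraph on `G × Fin s` in which `(i, a)` points to every vertex, other than itself, over
the translate by `i` of the block `T a`, is a directed strongly regular graph. -/
theorem isDSRG_blockDigraph [Fintype G] (hzero : ∀ a, T a 0)
    (hrow : ∀ a, Nat.card {c // T a c} = l + 1)
    (hcol : ∀ c, c ≠ 0 → Nat.card {a // T a c} = d) (hds : d ≤ s)
    (hcard : (Fintype.card G - 1) * d = l * s) :
    IsDSRG (fun x y : G × Fin s => T x.2 (y.1 - x.1) ∧ x ≠ y)
      (Fintype.card G * s) (l * s + s - 1) (l * d + s - 1) (l * d + s - 2) ((l + 1) * d) := by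
  have hwalk := card_blockWalks hzero hrow hcol hds
  have hsum : (l + 1) * d + (s - d) = l * d + s := by
    rw [Nat.succ_mul]
    omega
  have hrefl : ∀ x : G × Fin s, T x.2 (x.1 - x.1) := fun x => by simp [hzero]
  refine ⟨inferInstance, fun x h => h.2 rfl, by simp, fun x => ?_, fun x => ?_, fun x => ?_,
    fun x y hxy h => ?_, fun x y hxy h => ?_⟩ <;>
    rw [Nat.card_eq_fintype_card, Fintype.card_subtype]
  · have hout : #{y : G × Fin s | T x.2 (y.1 - x.1)} = l * s + s := by
      rw [show ({y : G × Fin s | T x.2 (y.1 - x.1)} : Finset _) =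
        ({k : G | T x.2 (k - x.1)} : Finset G) ×ˢ univ by ext; simp,
        card_product, card_outBlocks hrow]
      simp [Nat.succ_mul]
    rw [← hout, ← card_erase_of_mem (a := x) (by simp [hzero])]
    congr 1
    ext y
    simp only [mem_filter, mem_univ, true_and, mem_erase]
    tauto
  · have hin : #{y : G × Fin s | T y.2 (x.1 - y.1)} = l * s + s := by
      rw [card_filter, Fintype.sum_prod_type]
      simp_rw [← card_filter, card_blocks_through hzero hcol hds, sub_eq_zero]
      rw [sum_add_distrib, sum_const, sum_ite_eq, card_univ, smul_eq_mul, if_pos (mem_univ _),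
        ← hcard, Nat.sub_one_mul]
      have := Nat.le_mul_of_pos_left d (Fintype.card_pos (α := G))
      omega
    rw [← hin, ← card_erase_of_mem (a := x) (by simp [hzero])]
    congr 1
    ext y
    simp only [mem_filter, mem_univ, true_and, mem_erase]
    tauto
  · have hw := hwalk x.1 x.1 x.2
    rw [if_pos (hrefl x), hsum] at hw
    rw [← hw, ← card_erase_of_mem (a := x) (by simp [hzero])]
    congr 1
    ext y
    simp only [mem_filter, mem_univ, true_and, mem_erase]
    tauto
  · have hw := hwalk x.1 y.1 x.2
    rw [if_pos h.1, hsum] at hw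
    rw [← hw, show ∀ n, n - 2 = n - 1 - 1 from fun n => rfl,
      ← card_erase_of_mem (a := x) (by simp [hzero, h.1]),
      ← card_erase_of_mem (a := y) (by simp [hzero, h.1, hxy.symm])]
    congr 1
    ext z
    simp only [mem_filter, mem_univ, true_and, mem_erase]
    tauto
  · have hT : ¬ T x.2 (y.1 - x.1) := fun h' => h ⟨h', hxy⟩
    have hw := hwalk x.1 y.1 x.2
    rw [if_neg hT, add_zero] at hw
    rw [← hw]
    congr 1
    ext z
    simp only [mem_filter, mem_univ, true_and]
    refine ⟨fun hz => ⟨hz.1.1, hz.2.1⟩, fun hz => ⟨⟨hz.1, ?_⟩, hz.2, ?_⟩⟩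
    · rintro rfl
      exact hT hz.2
    · rintro rfl
      exact hT hz.1

end BlockDigraph


/-- For all positive integers `d, l, s` such that `d` divides `ls` and
`1 ≤ l < ls/d`, there exists a directed strongly regular graph with parameters
`((1 + ls/d)s, ls + s − 1, ld + s − 1, ld + s − 2, (l+1)d)`. -/
theorem exists_dsrg_family_three
    (d l s : ℕ) (hd : 0 < d) (hl : 0 < l) (hs : 0 < s)
    (hdvd : d ∣ l * s) (hlt : l < l * s / d) :
    ∃ (V : Type) (Adj : V → V → Prop),
      IsDSRG Adj
        ((1 + l * s / d) * s) (l * s + s - 1) (l * d + s - 1) (l * d + s - 2)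
        ((l + 1) * d) := by
  have hm : l * s / d * d = l * s := Nat.div_mul_cancel hdvd
  have hds : d ≤ s := by
    by_contra! h
    have h1 : l * d < l * s / d * d := Nat.mul_lt_mul_of_pos_right hlt hd
    have h2 : l * s < l * d := Nat.mul_lt_mul_of_pos_left h hl
    omega
  obtain ⟨T, hzero, hrow, hcol⟩ :=
    exists_pointed_tactical_configuration (d := d) (s := s)
      (by rw [mul_comm s, mul_comm d, hm]) hlt.le
  have h := isDSRG_blockDigraph hzero hrow hcol hds (by simpa using hm)
  rw [Fintype.card_fin] at h
  rw [add_comm 1]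
  exact ⟨_, _, h⟩
end

section
/- In the Construction I setup, the indexed family of blocks (B_{gl,j}) for g ∈ P, 1 ≤ l ≤ b, 1 ≤ j ≤ q forms a tactical configuration on the rq-element point set P with parameters (v̄, b̄, k̄, r̄) = (rq, rq²b, ra, rq(q−1)): there are rq²b blocks (counted with multiplicity over the index triples (g, l, j)), each block B_{gl,j} is an ra-element subset of P, and every point of P belongs to exactly rq(q−1) of the blocks B_{gl,j} (counted with multiplicity over the index triples). -/
/-- **Tactical configuration of Construction I.**  With `q = ab + 1`, the point set
`P` (the finite type `α`) is partitioned into `r` groups of size `q`; `Pblk j`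
enumerates the `q` blocks of `𝓟_j` (each an `a`-subset of `G j`, each point of
`G j` in exactly `a` of them); `B_j = ⋃_h Pblk h (σ h j)` with `σ h` bijective,
so `P_{hj} = Pblk h (σ h j)`; and for each point `g`, `X g 1, …, X g b` is a
partition of `G (grp g) \ {g}` into `b` parts of size `a`.  Then the indexed
family of blocks `B_{gl,j} = X g l ∪ (B_j \ P_{(grp g) j})`, over the index
triples `(g, l, j)`, forms a tactical configuration on `P` with parameters
`(v̄, b̄, k̄, r̄) = (rq, rq²b, ra, rq(q−1))`: there are `rq` points and `rq²b`
index triples, each block has `ra` elements, and each point lies in exactly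
`rq(q−1)` of the blocks (counted with multiplicity over the index triples). -/
theorem constructionI_tactical_configuration
    {α : Type} [Fintype α] [DecidableEq α]
    (r q a b : ℕ) (hr : 1 < r) (hq : 1 < q) (ha : 1 < a) (hb : 1 < b)
    (hab : q = a * b + 1)
    (G : Fin r → Finset α)
    (hGdisj : ∀ i j : Fin r, i ≠ j → Disjoint (G i) (G j))
    (hGcard : ∀ i : Fin r, (G i).card = q)
    (grp : α → Fin r) (hgrp : ∀ x : α, x ∈ G (grp x))
    (Pblk : Fin r → Fin q → Finset α)
    (hPsub : ∀ (j : Fin r) (i : Fin q), Pblk j i ⊆ G j)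
    (hPcard : ∀ (j : Fin r) (i : Fin q), (Pblk j i).card = a)
    (hPreg : ∀ j : Fin r, ∀ x ∈ G j,
      (Finset.univ.filter (fun i : Fin q => x ∈ Pblk j i)).card = a)
    (σ : Fin r → Fin q → Fin q) (hσ : ∀ h : Fin r, Function.Bijective (σ h))
    (X : α → Fin b → Finset α)
    (hXsub : ∀ (g : α) (l : Fin b), X g l ⊆ G (grp g) \ {g})
    (hXcard : ∀ (g : α) (l : Fin b), (X g l).card = a)
    (hXdisj : ∀ (g : α) (l l' : Fin b), l ≠ l' → Disjoint (X g l) (X g l'))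
    (hXcover : ∀ g : α, ∀ x ∈ G (grp g) \ {g}, ∃ l : Fin b, x ∈ X g l) :
    Fintype.card α = r * q ∧
    Fintype.card (α × Fin b × Fin q) = r * q * q * b ∧
    (∀ (g : α) (l : Fin b) (j : Fin q),
      (X g l ∪ ((Finset.univ.biUnion fun h : Fin r => Pblk h (σ h j)) \
        Pblk (grp g) (σ (grp g) j))).card = r * a) ∧
    (∀ x : α,
      (Finset.univ.filter (fun p : α × Fin b × Fin q =>
        x ∈ X p.1 p.2.1 ∪
          ((Finset.univ.biUnion fun h : Fin r => Pblk h (σ h p.2.2)) \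
            Pblk (grp p.1) (σ (grp p.1) p.2.2)))).card = r * q * (q - 1)) := by
  have hmemG : ∀ (x : α) (i : Fin r), x ∈ G i ↔ grp x = i := fun x i =>
    ⟨fun hx => by_contra fun hne =>
      Finset.disjoint_left.mp (hGdisj _ _ hne) (hgrp x) hx, fun h => h ▸ hgrp x⟩
  have hPgrp : ∀ {x : α} {h : Fin r} {i : Fin q}, x ∈ Pblk h i → grp x = h :=
    fun hx => (hmemG _ _).mp (hPsub _ _ hx)
  have hXgrp : ∀ {x g : α} {l : Fin b}, x ∈ X g l → grp x = grp g ∧ x ≠ g := by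
    intro x g l hx
    have hx' := hXsub g l hx
    rw [Finset.mem_sdiff, Finset.mem_singleton, hmemG] at hx'
    exact hx'
  have hcard : Fintype.card α = r * q := by
    have hcover : (Finset.univ : Finset α) = Finset.univ.biUnion G := by
      ext x
      simpa using ⟨grp x, hgrp x⟩
    rw [← Finset.card_univ, hcover, Finset.card_biUnion fun i _ j _ hij => hGdisj i j hij]
    simp [hGcard]
  refine ⟨hcard, ?_, ?_, ?_⟩
  · simp only [Fintype.card_prod, Fintype.card_fin, hcard]
    ring
  · intro g l j
    have hdisj : Disjoint (X g l) ((Finset.univ.biUnion fun h : Fin r => Pblk h (σ h j)) \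
        Pblk (grp g) (σ (grp g) j)) := by
      rw [Finset.disjoint_left]
      intro x hx hx'
      simp only [Finset.mem_sdiff, Finset.mem_biUnion, Finset.mem_univ, true_and] at hx'
      obtain ⟨⟨h, hxh⟩, hx'⟩ := hx'
      obtain rfl : grp g = h := (hXgrp hx).1.symm.trans (hPgrp hxh)
      exact hx' hxh
    have hunion : (Finset.univ.biUnion fun h : Fin r => Pblk h (σ h j)).card = r * a := by
      rw [Finset.card_biUnion fun i _ k _ hik =>
        (hGdisj i k hik).mono (hPsub _ _) (hPsub _ _)]
      simp [hPcard]
    have hsub : Pblk (grp g) (σ (grp g) j) ⊆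
        Finset.univ.biUnion fun h : Fin r => Pblk h (σ h j) :=
      Finset.subset_biUnion_of_mem (fun h : Fin r => Pblk h (σ h j)) (Finset.mem_univ _)
    rw [Finset.card_union_of_disjoint hdisj, Finset.card_sdiff_of_subset hsub, hunion,
      hPcard, hXcard]
    exact Nat.add_sub_cancel' (Nat.le_mul_of_pos_left a (by omega))
  · intro x
    have hmem : ∀ (g : α) (l : Fin b) (j : Fin q),
        x ∈ X g l ∪ ((Finset.univ.biUnion fun h : Fin r => Pblk h (σ h j)) \
          Pblk (grp g) (σ (grp g) j)) ↔
        x ∈ X g l ∨ (grp x ≠ grp g ∧ x ∈ Pblk (grp x) (σ (grp x) j)) := by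
      intro g l j
      simp only [Finset.mem_union, Finset.mem_sdiff, Finset.mem_biUnion, Finset.mem_univ,
        true_and]
      refine or_congr_right ⟨?_, ?_⟩
      · rintro ⟨⟨h, hxh⟩, hx⟩
        obtain rfl := hPgrp hxh
        exact ⟨fun he => hx (he ▸ hxh), hxh⟩
      · rintro ⟨hne, hx⟩
        exact ⟨⟨_, hx⟩, fun hx' => hne (hPgrp hx')⟩
    have hX : ∀ g : α, grp x = grp g → x ≠ g →
        (Finset.univ.filter fun l : Fin b => x ∈ X g l).card = 1 := by
      intro g hg hne
      obtain ⟨l, hl⟩ := hXcover g x (by simp [hmemG, hg, hne])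
      refine Finset.card_eq_one.mpr ⟨l, ?_⟩
      ext l'
      simp only [Finset.mem_filter, Finset.mem_univ, true_and, Finset.mem_singleton]
      refine ⟨fun hl' => by_contra fun h => ?_, fun h => h ▸ hl⟩
      exact Finset.disjoint_left.mp (hXdisj g l' l h) hl' hl
    have hP : (Finset.univ.filter fun j : Fin q =>
        x ∈ Pblk (grp x) (σ (grp x) j)).card = a := by
      rw [← hPreg (grp x) x (hgrp x)]
      exact Finset.card_bijective _ (hσ (grp x)) (by simp)
    have hfiber : ∀ g : α, (Finset.univ.filter fun p : Fin b × Fin q =>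
        x ∈ X g p.1 ∨ (grp x ≠ grp g ∧ x ∈ Pblk (grp x) (σ (grp x) p.2))).card =
        if g ∈ G (grp x) then (if g = x then 0 else q) else b * a := by
      intro g
      split_ifs with hg hgx
      · subst hgx
        simpa [Finset.filter_eq_empty_iff] using
          fun l (_ : Fin q) (hl : g ∈ X g l) => (hXgrp hl).2 rfl
      · have hg' : grp x = grp g := ((hmemG _ _).mp hg).symm
        have hprod : (Finset.univ.filter fun p : Fin b × Fin q =>
            x ∈ X g p.1 ∨ (grp x ≠ grp g ∧ x ∈ Pblk (grp x) (σ (grp x) p.2))) =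
            (Finset.univ.filter fun l : Fin b => x ∈ X g l) ×ˢ Finset.univ := by
          ext p
          simp [hg']
        rw [hprod, Finset.card_product, hX g hg' (Ne.symm hgx)]
        simp
      · have hg' : grp x ≠ grp g := fun h => hg ((hmemG _ _).mpr h.symm)
        have hprod : (Finset.univ.filter fun p : Fin b × Fin q =>
            x ∈ X g p.1 ∨ (grp x ≠ grp g ∧ x ∈ Pblk (grp x) (σ (grp x) p.2))) =
            Finset.univ ×ˢ
              (Finset.univ.filter fun j : Fin q => x ∈ Pblk (grp x) (σ (grp x) j)) := by
          ext p
          simpa [hg'] using fun hx => absurd (hXgrp hx).1 hg'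
        rw [hprod, Finset.card_product, hP]
        simp
    have hsum : (Finset.univ.filter (fun p : α × Fin b × Fin q =>
        x ∈ X p.1 p.2.1 ∨ (grp x ≠ grp p.1 ∧ x ∈ Pblk (grp x) (σ (grp x) p.2.2)))).card =
        ∑ g : α, if g ∈ G (grp x) then (if g = x then 0 else q) else b * a := by
      simp only [← hfiber, Finset.card_filter]
      exact Fintype.sum_prod_type _
    have hin : ∑ g ∈ G (grp x), (if g = x then 0 else q) = (q - 1) * q := by
      rw [← Finset.add_sum_erase _ _ (hgrp x), if_pos rfl, zero_add,
        Finset.sum_congr rfl fun g hg => if_neg (Finset.ne_of_mem_erase hg),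
        Finset.sum_const, Finset.card_erase_of_mem (hgrp x), hGcard, smul_eq_mul]
    have hout : (Finset.univ.filter fun g : α => g ∉ G (grp x)).card = (r - 1) * q := by
      rw [Finset.filter_not, Finset.filter_univ_mem,
        Finset.card_sdiff_of_subset (Finset.subset_univ _), Finset.card_univ, hcard, hGcard,
        Nat.sub_mul, one_mul]
    simp only [hmem]
    rw [hsum, Finset.sum_ite, Finset.filter_univ_mem, hin, Finset.sum_const, hout, smul_eq_mul,
      show b * a = q - 1 by rw [hab, Nat.add_sub_cancel, mul_comm]]
    obtain ⟨s, rfl⟩ : ∃ s, r = s + 1 := ⟨r - 1, by omega⟩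
    rw [Nat.add_sub_cancel]
    ring
end

section
/- In the Construction I setup with b = 1, the indexed family of blocks (B_{g,j}) for g ∈ P, 1 ≤ j ≤ q forms a tactical configuration on the rq-element point set P with parameters (v̄, b̄, k̄, r̄) = (rq, rq², r(q−1), rq(q−1)): there are rq² blocks (counted with multiplicity over the index pairs (g, j)), each block B_{g,j} is an r(q−1)-element subset of P, and every point of P belongs to exactly rq(q−1) of the blocks B_{g,j} (counted with multiplicity over the index pairs). -/
open Finset

/-- An injective family of `q` subsets of size `q - 1` of a `q`-element set `s` lists every
complement of a point of `s` exactly once, so each point of `s` lies in `q - 1` members. -/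
theorem card_filter_mem_of_injective_card_sub_one {α : Type*} [DecidableEq α] {q : ℕ}
    (hq : 0 < q) {s : Finset α} (hs : s.card = q) {P : Fin q → Finset α}
    (hsub : ∀ i, P i ⊆ s) (hcard : ∀ i, (P i).card = q - 1) (hinj : Function.Injective P)
    {x : α} (hx : x ∈ s) :
    (univ.filter fun i => x ∈ P i).card = q - 1 := by
  have himage : univ.image P = s.powersetCard (q - 1) := by
    apply eq_of_subset_of_card_le
    · intro t ht
      obtain ⟨i, -, rfl⟩ := mem_image.1 ht
      exact mem_powersetCard.2 ⟨hsub i, hcard i⟩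
    · rw [card_image_of_injective _ hinj, card_powersetCard, hs, card_univ, Fintype.card_fin,
        Nat.choose_symm (by lia : 1 ≤ q), Nat.choose_one_right]
  have herase : s.erase x ∈ univ.image P := by
    rw [himage, mem_powersetCard, card_erase_of_mem hx, hs]
    exact ⟨erase_subset _ _, rfl⟩
  obtain ⟨k, -, hk⟩ := mem_image.1 herase
  have hfilter : (univ.filter fun i => x ∈ P i) = univ.erase k := by
    ext i
    simp only [mem_filter, mem_univ, true_and, mem_erase, and_true]
    constructor
    · rintro hi rfl
      simp [hk] at hi
    · intro hik
      by_contra hi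
      refine hik (hinj ?_)
      rw [hk]
      apply eq_of_subset_of_card_le (subset_erase.2 ⟨hsub i, hi⟩)
      rw [card_erase_of_mem hx, hs, hcard]
  rw [hfilter, card_erase_of_mem (mem_univ k), card_univ, Fintype.card_fin]

/-- **Tactical configuration of Construction I with `b = 1`.**  The point set `P`
(the finite type `α`) is partitioned into `r` groups of size `q`; for each group
`G j`, `Pblk j 1, …, Pblk j q` are pairwise distinct `(q−1)`-element subsets of
`G j` (hence exactly the `q` such subsets), and `B_i = ⋃_j Pblk j i`.  Then the
indexed family of blocks `B_{g,j} = (G (grp g) \ {g}) ∪ (B_j \ Pblk (grp g) j)`,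
over the index pairs `(g, j)`, forms a tactical configuration on `P` with
parameters `(v̄, b̄, k̄, r̄) = (rq, rq², r(q−1), rq(q−1))`: there are `rq` points
and `rq²` index pairs, each block has `r(q−1)` elements, and each point lies in
exactly `rq(q−1)` of the blocks (counted with multiplicity over index pairs). -/
theorem constructionI_b_eq_one_tactical_configuration
    {α : Type} [Fintype α] [DecidableEq α]
    (r q : ℕ) (hr : 1 < r) (hq : 1 < q)
    (G : Fin r → Finset α)
    (hGdisj : ∀ i j : Fin r, i ≠ j → Disjoint (G i) (G j))
    (hGcard : ∀ i : Fin r, (G i).card = q)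
    (grp : α → Fin r) (hgrp : ∀ x : α, x ∈ G (grp x))
    (Pblk : Fin r → Fin q → Finset α)
    (hPsub : ∀ (j : Fin r) (i : Fin q), Pblk j i ⊆ G j)
    (hPcard : ∀ (j : Fin r) (i : Fin q), (Pblk j i).card = q - 1)
    (hPinj : ∀ j : Fin r, Function.Injective (Pblk j)) :
    Fintype.card α = r * q ∧
    Fintype.card (α × Fin q) = r * q * q ∧
    (∀ (g : α) (j : Fin q),
      ((G (grp g) \ {g}) ∪
        ((Finset.univ.biUnion fun h : Fin r => Pblk h j) \ Pblk (grp g) j)).card =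
        r * (q - 1)) ∧
    (∀ x : α,
      (Finset.univ.filter (fun p : α × Fin q =>
        x ∈ (G (grp p.1) \ {p.1}) ∪
          ((Finset.univ.biUnion fun h : Fin r => Pblk h p.2) \
            Pblk (grp p.1) p.2))).card = r * q * (q - 1)) := by
  have hmem : ∀ (x : α) (i : Fin r), x ∈ G i ↔ grp x = i := fun x i =>
    ⟨fun hx => by_contra fun hne => disjoint_left.1 (hGdisj _ _ hne) (hgrp x) hx,
      fun h => h ▸ hgrp x⟩
  have hPgrp : ∀ {x : α} {h : Fin r} {j : Fin q}, x ∈ Pblk h j → grp x = h :=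
    fun hx => (hmem _ _).1 (hPsub _ _ hx)
  have hα : Fintype.card α = r * q := by
    have huniv : (univ : Finset α) = univ.biUnion G := by
      ext x
      simp [hmem]
    rw [← card_univ, huniv, card_biUnion fun i _ j _ hij => hGdisj i j hij]
    simp [hGcard]
  have hblock : ∀ (g : α) (j : Fin q) (x : α),
      x ∈ (G (grp g) \ {g}) ∪ ((univ.biUnion fun h : Fin r => Pblk h j) \ Pblk (grp g) j) ↔
        (grp x = grp g ∧ x ≠ g) ∨ (grp x ≠ grp g ∧ x ∈ Pblk (grp x) j) := by
    intro g j x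
    simp only [mem_union, mem_sdiff, mem_singleton, mem_biUnion, mem_univ, true_and, hmem]
    refine or_congr Iff.rfl ⟨?_, ?_⟩
    · rintro ⟨⟨h, hx⟩, hxg⟩
      obtain rfl := hPgrp hx
      exact ⟨fun he => hxg (he ▸ hx), hx⟩
    · rintro ⟨hne, hx⟩
      exact ⟨⟨_, hx⟩, fun hxg => hne (hPgrp hxg)⟩
  refine ⟨hα, by simp [hα], fun g j => ?_, fun x => ?_⟩
  · have hunion : (G (grp g) \ {g}) ∪
        ((univ.biUnion fun h : Fin r => Pblk h j) \ Pblk (grp g) j) =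
        univ.biUnion fun h => if h = grp g then (G h).erase g else Pblk h j := by
      ext x
      rw [hblock]
      simp only [mem_biUnion, mem_univ, true_and]
      constructor
      · rintro (⟨he, hne⟩ | ⟨hne, hx⟩)
        · exact ⟨grp g, by simp [hmem, he, hne]⟩
        · exact ⟨grp x, by simp [hne, hx]⟩
      · rintro ⟨h, hx⟩
        split_ifs at hx with hh
        · rw [mem_erase, hmem] at hx
          exact Or.inl ⟨hx.2.trans hh, hx.1⟩
        · obtain rfl := hPgrp hx
          exact Or.inr ⟨hh, hx⟩
    have hpart : ∀ h, (if h = grp g then (G h).erase g else Pblk h j) ⊆ G h := by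
      intro h
      split_ifs
      exacts [erase_subset _ _, hPsub h j]
    rw [hunion, card_biUnion fun h _ k _ hhk =>
      disjoint_of_subset_left (hpart h) (disjoint_of_subset_right (hpart k) (hGdisj h k hhk))]
    have hsize : ∀ h, (if h = grp g then (G h).erase g else Pblk h j).card = q - 1 := by
      intro h
      split_ifs with hh
      · rw [card_erase_of_mem (hh ▸ hgrp g), hGcard]
      · exact hPcard h j
    simp [hsize]
  · have hpairs : (univ.filter fun p : α × Fin q =>
        x ∈ (G (grp p.1) \ {p.1}) ∪
          ((univ.biUnion fun h : Fin r => Pblk h p.2) \ Pblk (grp p.1) p.2)) =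
        (G (grp x)).erase x ×ˢ univ ∪
          (G (grp x))ᶜ ×ˢ univ.filter fun j => x ∈ Pblk (grp x) j := by
      ext ⟨g, j⟩
      rw [mem_filter, hblock]
      simp only [mem_univ, true_and, mem_union, mem_product, mem_erase, mem_compl, mem_filter,
        hmem, and_true]
      grind
    have hdisj : Disjoint ((G (grp x)).erase x ×ˢ (univ : Finset (Fin q)))
        ((G (grp x))ᶜ ×ˢ univ.filter fun j => x ∈ Pblk (grp x) j) :=
      disjoint_product.2
        (Or.inl (disjoint_of_subset_left (erase_subset _ _) disjoint_compl_right))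
    rw [hpairs, card_union_of_disjoint hdisj, card_product, card_product,
      card_erase_of_mem (hgrp x), card_compl, hα, hGcard, card_univ, Fintype.card_fin,
      card_filter_mem_of_injective_card_sub_one (by lia) (hGcard _) (hPsub _) (hPcard _)
        (hPinj _) (hgrp x), mul_comm (q - 1) q, ← add_mul,
      Nat.add_sub_cancel' (Nat.le_mul_of_pos_left q (by lia))]
end

section
/- Projective-plane instance, first graph. Let D₁ be the directed graph on the vertex set V = {(p, B) : p ∈ P, B ∈ 𝓑_p}, with adjacency (p, B) → (p′, B′) if and only if p ∈ B′. Then D₁ is a directed strongly regular graph with parameters (v, k, t, λ, μ) = ((n+1)(n² + n + 1), n(n+1), n, n − 1, n). -/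
/-- Vertices of the flag graph satisfying `Q` are counted by summing, over the points `p`,
the number of lines through `p` whose punctured line satisfies `Q`. -/
theorem card_punctured_flags {α : Type} [Fintype α] [DecidableEq α]
    (𝓛 : Finset (Finset α)) (Q : α × Finset α → Prop) [DecidablePred Q] :
    Nat.card {z : {x : α × Finset α // ∃ L ∈ 𝓛, x.1 ∈ L ∧ x.2 = L \ {x.1}} // Q z.1} =
      ∑ p : α, (𝓛.filter fun L => p ∈ L ∧ Q (p, L \ {p})).card := by
  rw [← Finset.card_sigma, ← Nat.card_eq_finsetCard]
  symm
  refine Nat.card_congr (Equiv.ofBijective (fun s => ⟨⟨(s.1.1, s.1.2 \ {s.1.1}), ?_⟩, ?_⟩) ⟨?_, ?_⟩)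
  · have hs := s.2
    simp only [Finset.mem_sigma, Finset.mem_filter] at hs
    exact ⟨s.1.2, hs.2.1, hs.2.2.1, rfl⟩
  · have hs := s.2
    simp only [Finset.mem_sigma, Finset.mem_filter] at hs
    exact hs.2.2.2
  · rintro ⟨⟨p, L⟩, hL⟩ ⟨⟨q, M⟩, hM⟩ h
    simp only [Finset.mem_sigma, Finset.mem_filter] at hL hM
    simp only [Subtype.mk.injEq, Prod.mk.injEq] at h
    obtain ⟨rfl, h⟩ := h
    have hLM : L = M := by
      rw [← Finset.insert_erase hL.2.2.1, ← Finset.insert_erase hM.2.2.1,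
        Finset.erase_eq, Finset.erase_eq, h]
    subst hLM
    rfl
  · rintro ⟨⟨⟨p, B⟩, L, hL, hp, hB⟩, hQ⟩
    dsimp only at hp hB hQ
    subst hB
    exact ⟨⟨⟨p, L⟩, by simp [hL, hp, hQ]⟩, rfl⟩

/-- The number of lines through a point is `n + 1`. -/
theorem card_lines_through {α : Type} [Fintype α] [DecidableEq α]
    {n : ℕ} (hn : 0 < n) (hcard : Fintype.card α = n ^ 2 + n + 1)
    {𝓛 : Finset (Finset α)} (hline : ∀ L ∈ 𝓛, L.card = n + 1)
    (hpair : ∀ p q : α, p ≠ q → ∃! L, L ∈ 𝓛 ∧ p ∈ L ∧ q ∈ L) (p : α) :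
    (𝓛.filter fun L => p ∈ L).card = n + 1 := by
  have hunion : (𝓛.filter fun L => p ∈ L).biUnion (fun L => L.erase p) =
      Finset.univ.erase p := by
    ext q
    simp only [Finset.mem_biUnion, Finset.mem_filter, Finset.mem_erase, Finset.mem_univ, and_true]
    constructor
    · rintro ⟨L, -, hq, -⟩
      exact hq
    · intro hq
      obtain ⟨L, ⟨hL, hp, hqL⟩, -⟩ := hpair p q (Ne.symm hq)
      exact ⟨L, ⟨hL, hp⟩, hq, hqL⟩
  have hdisj : ((𝓛.filter fun L => p ∈ L : Finset (Finset α)) : Set (Finset α)).PairwiseDisjoint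
      (fun L => L.erase p) := by
    intro L hL M hM hLM
    refine Finset.disjoint_left.2 fun q hqL hqM => hLM ?_
    simp only [Finset.coe_filter, Set.mem_ofPred_eq, Finset.mem_erase] at hL hM hqL hqM
    exact (hpair p q (Ne.symm hqL.1)).unique ⟨hL.1, hL.2, hqL.2⟩ ⟨hM.1, hM.2, hqM.2⟩
  have hcount := Finset.card_biUnion hdisj
  rw [hunion, Finset.card_erase_of_mem (Finset.mem_univ p), Finset.card_univ, hcard,
    Finset.sum_congr rfl (g := fun _ => n), Finset.sum_const, smul_eq_mul] at hcount
  · refine Nat.eq_of_mul_eq_mul_right hn (hcount.symm.trans ?_)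
    rw [Nat.add_sub_cancel]
    ring
  · intro L hL
    rw [Finset.mem_filter] at hL
    rw [Finset.card_erase_of_mem hL.2, hline L hL.1, Nat.add_sub_cancel]

/-- Each point of `B` other than `p` is the base point of exactly one vertex whose
punctured line contains `p`. -/
theorem card_punctured_flags_mem {α : Type} [Fintype α] [DecidableEq α]
    {𝓛 : Finset (Finset α)}
    (hpair : ∀ p q : α, p ≠ q → ∃! L, L ∈ 𝓛 ∧ p ∈ L ∧ q ∈ L) (p : α) (B : Finset α) :
    Nat.card {z : {x : α × Finset α // ∃ L ∈ 𝓛, x.1 ∈ L ∧ x.2 = L \ {x.1}} //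
      p ∈ z.1.2 ∧ z.1.1 ∈ B} = (B.erase p).card := by
  rw [card_punctured_flags 𝓛 (fun z => p ∈ z.2 ∧ z.1 ∈ B), Finset.card_eq_sum_ones,
    ← Finset.sum_subset (Finset.subset_univ (B.erase p))]
  · refine Finset.sum_congr rfl fun q hq => ?_
    rw [Finset.mem_erase] at hq
    obtain ⟨L, ⟨hL, hqL, hpL⟩, huniq⟩ := hpair q p hq.1
    rw [Finset.card_eq_one]
    refine ⟨L, ?_⟩
    ext M
    simp only [Finset.mem_filter, Finset.mem_sdiff, Finset.mem_singleton]
    constructor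
    · rintro ⟨hM, hqM, ⟨hpM, -⟩, -⟩
      exact huniq M ⟨hM, hqM, hpM⟩
    · rintro rfl
      exact ⟨hL, hqL, ⟨hpL, Ne.symm hq.1⟩, hq.2⟩
  · intro q _ hq
    rw [Finset.card_eq_zero, Finset.filter_eq_empty_iff]
    rintro L - ⟨-, hp, hqB⟩
    rw [Finset.mem_sdiff, Finset.mem_singleton] at hp
    exact hq (Finset.mem_erase.2 ⟨Ne.symm hp.2, hqB⟩)

/-- **Projective-plane instance, first graph `D₁`.**  Let `(P, 𝓛)` be a projective
plane of order `n ≥ 2` (a `2-(n²+n+1, n+1, 1)` design): `P` has `n² + n + 1`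
points, each line has `n + 1` points, and each pair of distinct points lies on
exactly one line.  The blocks of `𝓑_p` are the punctured lines `L \ {p}` for the
lines `L` through `p`.  The vertices are the pairs `(p, B)` with `B ∈ 𝓑_p`, and
`(p,B) → (p',B')` iff `p ∈ B'`.  This directed graph is a DSRG with parameters
`((n+1)(n² + n + 1), n(n+1), n, n − 1, n)`. -/
theorem projective_plane_D1_dsrg
    {α : Type} [Fintype α] [DecidableEq α]
    (n : ℕ) (hn : 2 ≤ n)
    (hcard : Fintype.card α = n ^ 2 + n + 1)
    (𝓛 : Finset (Finset α))
    (hline : ∀ L ∈ 𝓛, L.card = n + 1)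
    (hpair : ∀ p q : α, p ≠ q → ∃! L, L ∈ 𝓛 ∧ p ∈ L ∧ q ∈ L) :
    IsDSRG (V := {x : α × Finset α // ∃ L ∈ 𝓛, x.1 ∈ L ∧ x.2 = L \ {x.1}})
      (fun x y => x.1.1 ∈ y.1.2)
      ((n + 1) * (n ^ 2 + n + 1)) (n * (n + 1)) n (n - 1) n := by
  have hblock : ∀ x : {x : α × Finset α // ∃ L ∈ 𝓛, x.1 ∈ L ∧ x.2 = L \ {x.1}},
      x.1.1 ∉ x.1.2 ∧ x.1.2.card = n := by
    rintro ⟨⟨p, B⟩, L, hL, hp, hB⟩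
    dsimp only at hp hB ⊢
    subst hB
    refine ⟨by simp, ?_⟩
    rw [← Finset.erase_eq, Finset.card_erase_of_mem hp, hline L hL, Nat.add_sub_cancel]
  have hthrough := card_lines_through (by omega) hcard hline hpair
  refine ⟨inferInstance, fun x => (hblock x).1, ?_, ?_, ?_, ?_, ?_, ?_⟩
  · rw [← Nat.card_congr (Equiv.subtypeUnivEquiv (p := fun _ => True) fun _ => trivial),
      card_punctured_flags 𝓛 (fun _ => True)]
    simp only [and_true, hthrough, Finset.sum_const, Finset.card_univ, hcard, smul_eq_mul]
    ring
  · intro x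
    have h := card_punctured_flags_mem hpair x.1.1 Finset.univ
    simp only [Finset.mem_univ, and_true, Finset.card_erase_of_mem, Finset.card_univ, hcard,
      Nat.add_sub_cancel] at h
    rw [h]
    ring
  · intro x
    rw [card_punctured_flags 𝓛 (fun z => z.1 ∈ x.1.2),
      ← Finset.sum_subset (Finset.subset_univ x.1.2),
      Finset.sum_congr rfl (g := fun _ => n + 1), Finset.sum_const, (hblock x).2, smul_eq_mul]
    · intro p hp
      simp only [hp, and_true, hthrough]
    · intro p _ hp
      simp only [hp, and_false, Finset.filter_false, Finset.card_empty]
  · intro x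
    rw [card_punctured_flags_mem hpair, Finset.erase_eq_of_notMem (hblock x).1, (hblock x).2]
  · intro x y _ hxy
    rw [card_punctured_flags_mem hpair, Finset.card_erase_of_mem hxy, (hblock y).2]
  · intro x y _ hxy
    rw [card_punctured_flags_mem hpair, Finset.erase_eq_of_notMem hxy, (hblock y).2]
end

section
/- Projective-plane instance, second graph. Let D₂ be the directed graph on the vertex set V = {(p, B) : p ∈ P, B ∈ 𝓑_p}, with adjacency (p, B) → (p′, B′) if and only if either p ∈ B′, or p = p′ and B ≠ B′. Then D₂ is a directed strongly regular graph with parameters (v, k, t, λ, μ) = ((n+1)(n² + n + 1), n(n+2), 2n, 2n − 1, n + 1). -/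
open Finset

/-- Being a directed strongly regular graph is invariant under isomorphism. -/
theorem IsDSRG.congr {V W : Type} {A : V → V → Prop} {B : W → W → Prop} {v k t lam mu : ℕ}
    (h : IsDSRG A v k t lam mu) (e : V ≃ W) (he : ∀ x y, A x y ↔ B (e x) (e y)) :
    IsDSRG B v k t lam mu := by
  obtain ⟨hfin, hirr, hv, hout, hin, ht, hlam, hmu⟩ := h
  refine ⟨Finite.of_equiv V e, e.forall_congr_right.mp fun x => (he x x).not.mp (hirr x),
    (Nat.card_congr e).symm.trans hv, e.forall_congr_right.mp fun x => ?_,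
    e.forall_congr_right.mp fun x => ?_, e.forall_congr_right.mp fun x => ?_,
    e.forall_congr_right.mp fun x => e.forall_congr_right.mp fun y hxy hA => ?_,
    e.forall_congr_right.mp fun x => e.forall_congr_right.mp fun y hxy hA => ?_⟩
  · rw [← hout x]
    exact (Nat.card_congr (e.subtypeEquiv fun y => he x y)).symm
  · rw [← hin x]
    exact (Nat.card_congr (e.subtypeEquiv fun y => he y x)).symm
  · rw [← ht x]
    exact (Nat.card_congr (e.subtypeEquiv fun y => and_congr (he x y) (he y x))).symm
  · rw [← hlam x y (fun h => hxy (congrArg e h)) ((he x y).mpr hA)]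
    exact (Nat.card_congr (e.subtypeEquiv fun z => and_congr (he x z) (he z y))).symm
  · rw [← hmu x y (fun h => hxy (congrArg e h)) (fun h => hA ((he x y).mp h))]
    exact (Nat.card_congr (e.subtypeEquiv fun z => and_congr (he x z) (he z y))).symm

theorem Finset.natCard_subtype_coe {β : Type*} (s t : Finset β) (Q : {x // x ∈ s} → Prop)
    (h : ∀ z, z ∈ t ↔ ∃ hz : z ∈ s, Q ⟨z, hz⟩) : Nat.card {z : {x // x ∈ s} // Q z} = #t := by
  rw [← Nat.card_eq_finsetCard]
  exact Nat.card_congr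
    { toFun := fun z => ⟨z.1.1, (h _).mpr ⟨z.1.2, z.2⟩⟩
      invFun := fun z => ⟨⟨z.1, ((h _).mp z.2).1⟩, ((h _).mp z.2).2⟩
      left_inv := fun _ => rfl
      right_inv := fun _ => rfl }

namespace ProjectivePlane

variable {α : Type} [DecidableEq α]

theorem card_lines_through_two {𝓛 : Finset (Finset α)}
    (hpair : ∀ p q : α, p ≠ q → ∃! L, L ∈ 𝓛 ∧ p ∈ L ∧ q ∈ L) {p q : α} (hpq : p ≠ q) :
    #{L ∈ 𝓛 | p ∈ L ∧ q ∈ L} = 1 := by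
  obtain ⟨L, hL, huniq⟩ := hpair p q hpq
  refine card_eq_one.mpr ⟨L, ext fun M => ?_⟩
  rw [mem_filter, mem_singleton]
  exact ⟨huniq M, fun h => h ▸ hL⟩

variable [Fintype α]

/-- The incident point-line pairs. -/
def flags (𝓛 : Finset (Finset α)) : Finset (α × Finset α) :=
  {x ∈ univ ×ˢ 𝓛 | x.1 ∈ x.2}

theorem mem_flags {𝓛 : Finset (Finset α)} {x : α × Finset α} :
    x ∈ flags 𝓛 ↔ x.2 ∈ 𝓛 ∧ x.1 ∈ x.2 := by
  simp [flags]

/-- Counting flags point by point. -/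
theorem card_filter_flags (𝓛 : Finset (Finset α)) (R : α → Prop) [DecidablePred R]
    (S : Finset α → Prop) [DecidablePred S] :
    #{x ∈ flags 𝓛 | R x.1 ∧ S x.2} = ∑ p with R p, #{L ∈ 𝓛 | p ∈ L ∧ S L} := by
  simp only [flags, filter_filter, card_filter, sum_product, sum_filter]
  refine sum_congr rfl fun p _ => ?_
  split_ifs with h <;> simp [h]

theorem card_lines_through {n : ℕ} (hn : 0 < n) (hcard : Fintype.card α = n ^ 2 + n + 1)
    {𝓛 : Finset (Finset α)} (hline : ∀ L ∈ 𝓛, #L = n + 1)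
    (hpair : ∀ p q : α, p ≠ q → ∃! L, L ∈ 𝓛 ∧ p ∈ L ∧ q ∈ L) (p : α) :
    #{L ∈ 𝓛 | p ∈ L} = n + 1 := by
  have key : ∑ q ∈ univ.erase p, #{L ∈ {L ∈ 𝓛 | p ∈ L} | q ∈ L} =
      ∑ L ∈ 𝓛 with p ∈ L, #{q ∈ univ.erase p | q ∈ L} :=
    sum_card_bipartiteAbove_eq_sum_card_bipartiteBelow (fun q L => q ∈ L)
  have hleft : ∀ q ∈ univ.erase p, #{L ∈ {L ∈ 𝓛 | p ∈ L} | q ∈ L} = 1 := fun q hq => by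
    rw [filter_filter]
    exact card_lines_through_two hpair (ne_of_mem_erase hq).symm
  have hright : ∀ L ∈ {L ∈ 𝓛 | p ∈ L}, #{q ∈ univ.erase p | q ∈ L} = n := fun L hL => by
    obtain ⟨hL, hp⟩ := mem_filter.mp hL
    have : ({q ∈ univ.erase p | q ∈ L} : Finset α) = L.erase p := by
      ext q
      simp
    rw [this, card_erase_of_mem hp, hline L hL, Nat.add_sub_cancel]
  rw [sum_congr rfl hleft, sum_congr rfl hright, sum_const, sum_const,
    card_erase_of_mem (mem_univ p), card_univ, hcard, smul_eq_mul, smul_eq_mul] at key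
  refine Nat.eq_of_mul_eq_mul_right hn (key.symm.trans ?_)
  rw [Nat.add_sub_cancel]
  ring

/-- The number of flags `(q, M)` with `q ∈ L` and `p ∈ M`. -/
theorem card_flags_between {n : ℕ} (hn : 0 < n) (hcard : Fintype.card α = n ^ 2 + n + 1)
    {𝓛 : Finset (Finset α)} (hline : ∀ L ∈ 𝓛, #L = n + 1)
    (hpair : ∀ p q : α, p ≠ q → ∃! L, L ∈ 𝓛 ∧ p ∈ L ∧ q ∈ L) (p : α) {L : Finset α}
    (hL : L ∈ 𝓛) :
    #{x ∈ flags 𝓛 | x.1 ∈ L ∧ p ∈ x.2} = if p ∈ L then 2 * n + 1 else n + 1 := by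
  rw [card_filter_flags 𝓛 (· ∈ L) (p ∈ ·), filter_univ_mem]
  have hne : ∀ q ∈ L.erase p, #{M ∈ 𝓛 | q ∈ M ∧ p ∈ M} = 1 := fun q hq =>
    card_lines_through_two hpair (ne_of_mem_erase hq)
  split_ifs with hp
  · rw [← add_sum_erase L _ hp, sum_congr rfl hne, sum_const, card_erase_of_mem hp, hline L hL]
    simp only [and_self, card_lines_through hn hcard hline hpair, smul_eq_mul]
    lia
  · rw [erase_eq_of_notMem hp] at hne
    rw [sum_congr rfl hne, sum_const, hline L hL, smul_eq_mul, mul_one]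

theorem card_flags {n : ℕ} (hn : 0 < n) (hcard : Fintype.card α = n ^ 2 + n + 1)
    {𝓛 : Finset (Finset α)} (hline : ∀ L ∈ 𝓛, #L = n + 1)
    (hpair : ∀ p q : α, p ≠ q → ∃! L, L ∈ 𝓛 ∧ p ∈ L ∧ q ∈ L) :
    #(flags 𝓛) = (n + 1) * (n ^ 2 + n + 1) := by
  have h := card_filter_flags 𝓛 (fun _ => True) (fun _ => True)
  simp only [and_self, and_true, filter_true, card_lines_through hn hcard hline hpair,
    sum_const, card_univ, hcard, smul_eq_mul] at h
  rw [h, mul_comm]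

theorem card_flags_point_mem {n : ℕ} (hn : 0 < n) (hcard : Fintype.card α = n ^ 2 + n + 1)
    {𝓛 : Finset (Finset α)} (hline : ∀ L ∈ 𝓛, #L = n + 1)
    (hpair : ∀ p q : α, p ≠ q → ∃! L, L ∈ 𝓛 ∧ p ∈ L ∧ q ∈ L) {L : Finset α} (hL : L ∈ 𝓛) :
    #{x ∈ flags 𝓛 | x.1 ∈ L} = (n + 1) * (n + 1) := by
  have h := card_filter_flags 𝓛 (· ∈ L) (fun _ => True)
  simpa only [and_true, filter_univ_mem, card_lines_through hn hcard hline hpair,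
    sum_const, hline L hL, smul_eq_mul] using h

theorem card_flags_mem_line {n : ℕ} (hn : 0 < n) (hcard : Fintype.card α = n ^ 2 + n + 1)
    {𝓛 : Finset (Finset α)} (hline : ∀ L ∈ 𝓛, #L = n + 1)
    (hpair : ∀ p q : α, p ≠ q → ∃! L, L ∈ 𝓛 ∧ p ∈ L ∧ q ∈ L) (p : α) :
    #{x ∈ flags 𝓛 | p ∈ x.2} = (n + 1) * (n + 1) := by
  have h := card_filter_flags 𝓛 (fun _ => True) (p ∈ ·)
  simp only [true_and, filter_true] at h
  have hne : ∀ q ∈ univ.erase p, #{M ∈ 𝓛 | q ∈ M ∧ p ∈ M} = 1 := fun q hq =>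
    card_lines_through_two hpair (ne_of_mem_erase hq)
  rw [h, ← add_sum_erase univ _ (mem_univ p), sum_congr rfl hne, sum_const,
    card_erase_of_mem (mem_univ p), card_univ, hcard]
  simp only [and_self, card_lines_through hn hcard hline hpair, smul_eq_mul]
  rw [Nat.add_sub_cancel]
  ring

/-- The graph `D₂` in terms of flags: `x → y` when the point of `x` lies on the line of `y`
and `x ≠ y`. -/
theorem isDSRG_flags {n : ℕ} (hn : 0 < n) (hcard : Fintype.card α = n ^ 2 + n + 1)
    {𝓛 : Finset (Finset α)} (hline : ∀ L ∈ 𝓛, #L = n + 1)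
    (hpair : ∀ p q : α, p ≠ q → ∃! L, L ∈ 𝓛 ∧ p ∈ L ∧ q ∈ L) :
    IsDSRG (V := {x // x ∈ flags 𝓛}) (fun x y => x.1.1 ∈ y.1.2 ∧ x ≠ y)
      ((n + 1) * (n ^ 2 + n + 1)) (n * (n + 2)) (2 * n) (2 * n - 1) (n + 1) := by
  refine ⟨inferInstance, fun x h => h.2 rfl, ?_, ?_, ?_, ?_, ?_, ?_⟩
  · rw [Nat.card_eq_fintype_card, Fintype.card_coe, card_flags hn hcard hline hpair]
  · rintro ⟨x, hx⟩
    have hx' := mem_flags.mp hx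
    rw [natCard_subtype_coe _ ({z ∈ flags 𝓛 | x.1 ∈ z.2}.erase x), card_erase_of_mem,
      card_flags_mem_line hn hcard hline hpair]
    · exact Nat.sub_eq_of_eq_add (by ring)
    · simp [hx, hx']
    · intro z
      simp only [mem_erase, mem_filter, ne_eq, Subtype.mk.injEq, exists_prop]
      grind
  · rintro ⟨x, hx⟩
    have hx' := mem_flags.mp hx
    rw [natCard_subtype_coe _ ({z ∈ flags 𝓛 | z.1 ∈ x.2}.erase x), card_erase_of_mem,
      card_flags_point_mem hn hcard hline hpair hx'.1]
    · exact Nat.sub_eq_of_eq_add (by ring)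
    · simp [hx, hx']
    · intro z
      simp only [mem_erase, mem_filter, ne_eq, Subtype.mk.injEq, exists_prop]
      grind
  · rintro ⟨x, hx⟩
    have hx' := mem_flags.mp hx
    rw [natCard_subtype_coe _ ({z ∈ flags 𝓛 | z.1 ∈ x.2 ∧ x.1 ∈ z.2}.erase x),
      card_erase_of_mem, card_flags_between hn hcard hline hpair _ hx'.1, if_pos hx'.2,
      Nat.add_sub_cancel]
    · simp [hx, hx']
    · intro z
      simp only [mem_erase, mem_filter, ne_eq, Subtype.mk.injEq, exists_prop]
      grind
  · rintro ⟨x, hx⟩ ⟨y, hy⟩ hxy ⟨hadj, -⟩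
    have hx' := mem_flags.mp hx
    have hy' := mem_flags.mp hy
    have hne : y ≠ x := fun h => hxy (Subtype.ext h.symm)
    rw [natCard_subtype_coe _ (({z ∈ flags 𝓛 | z.1 ∈ y.2 ∧ x.1 ∈ z.2}.erase x).erase y),
      card_erase_of_mem, card_erase_of_mem, card_flags_between hn hcard hline hpair _ hy'.1,
      if_pos hadj, Nat.add_sub_cancel]
    · simp [hx, hx', hadj]
    · simp [hy, hy', hadj, hne]
    · intro z
      simp only [mem_erase, mem_filter, ne_eq, Subtype.mk.injEq, exists_prop]
      grind
  · rintro ⟨x, hx⟩ ⟨y, hy⟩ hxy hadj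
    have hy' := mem_flags.mp hy
    have hnot : x.1 ∉ y.2 := fun h => hadj ⟨h, hxy⟩
    rw [natCard_subtype_coe _ {z ∈ flags 𝓛 | z.1 ∈ y.2 ∧ x.1 ∈ z.2},
      card_flags_between hn hcard hline hpair _ hy'.1, if_neg hnot]
    intro z
    simp only [mem_filter, ne_eq, Subtype.mk.injEq, exists_prop]
    grind

/-- Puncturing the line of a flag `(p, L)` at `p`. -/
def puncture (𝓛 : Finset (Finset α)) :
    {x // x ∈ flags 𝓛} ≃ {x : α × Finset α // ∃ L ∈ 𝓛, x.1 ∈ L ∧ x.2 = L \ {x.1}} where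
  toFun x := ⟨(x.1.1, x.1.2 \ {x.1.1}), x.1.2, (mem_flags.mp x.2).1, (mem_flags.mp x.2).2, rfl⟩
  invFun x := ⟨(x.1.1, insert x.1.1 x.1.2), by
    obtain ⟨L, hL, hp, hB⟩ := x.2
    rw [hB, ← erase_eq, insert_erase hp]
    exact mem_flags.mpr ⟨hL, hp⟩⟩
  left_inv := by
    rintro ⟨⟨p, L⟩, h⟩
    have hp : p ∈ L := (mem_flags.mp h).2
    simp [← erase_eq, insert_erase hp]
  right_inv := by
    rintro ⟨⟨p, B⟩, h⟩
    obtain ⟨L, hL, hp, rfl : B = L \ {p}⟩ := id h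
    simp only [← erase_eq, insert_erase hp]

end ProjectivePlane

/-- **Projective-plane instance, second graph `D₂`.**  Let `(P, 𝓛)` be a projective
plane of order `n ≥ 2` (a `2-(n²+n+1, n+1, 1)` design): `P` has `n² + n + 1`
points, each line has `n + 1` points, and each pair of distinct points lies on
exactly one line.  The blocks of `𝓑_p` are the punctured lines `L \ {p}` for the
lines `L` through `p`.  The vertices are the pairs `(p, B)` with `B ∈ 𝓑_p`, and
`(p,B) → (p',B')` iff `p ∈ B'`, or `p = p'` and `B ≠ B'`.  This directed graph is
a DSRG with parameters `((n+1)(n² + n + 1), n(n+2), 2n, 2n − 1, n + 1)`. -/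
theorem projective_plane_D2_dsrg
    {α : Type} [Fintype α] [DecidableEq α]
    (n : ℕ) (hn : 2 ≤ n)
    (hcard : Fintype.card α = n ^ 2 + n + 1)
    (𝓛 : Finset (Finset α))
    (hline : ∀ L ∈ 𝓛, L.card = n + 1)
    (hpair : ∀ p q : α, p ≠ q → ∃! L, L ∈ 𝓛 ∧ p ∈ L ∧ q ∈ L) :
    IsDSRG (V := {x : α × Finset α // ∃ L ∈ 𝓛, x.1 ∈ L ∧ x.2 = L \ {x.1}})
      (fun x y => x.1.1 ∈ y.1.2 ∨ (x.1.1 = y.1.1 ∧ x.1.2 ≠ y.1.2))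
      ((n + 1) * (n ^ 2 + n + 1)) (n * (n + 2)) (2 * n) (2 * n - 1) (n + 1) := by
  refine (ProjectivePlane.isDSRG_flags (by lia) hcard hline hpair).congr
    (ProjectivePlane.puncture 𝓛) ?_
  rintro ⟨⟨p, L⟩, hx⟩ ⟨⟨q, M⟩, hy⟩
  have hp : p ∈ L := (ProjectivePlane.mem_flags.mp hx).2
  have hq : q ∈ M := (ProjectivePlane.mem_flags.mp hy).2
  simp only [ProjectivePlane.puncture, Equiv.coe_fn_mk, mem_sdiff, mem_singleton, ne_eq,
    Subtype.mk.injEq, Prod.mk.injEq]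
  by_cases hpq : p = q
  · subst hpq
    have hLM : L \ {p} = M \ {p} ↔ L = M := by
      refine ⟨fun h => ?_, fun h => h ▸ rfl⟩
      rw [← erase_eq, ← erase_eq] at h
      rw [← insert_erase hp, h, insert_erase hq]
    simp [hLM, hq]
  · simp [hpq]
end
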